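/- arXiv:2201.09781 — 2 statements merged into one kernel-verified Lean document; each statement's English description precedes it below -/
import Mathlib

section
/- Let d ≥ 1, let f ∈ C^∞(ℝ^d) satisfy ‖(1+|x|²)^{n/2} ∂^β f‖_{L²(ℝ^d)} ≤ D₁ D₂^{n+|β|} (n!)^ν (|β|!)^μ for all n ∈ ℕ₀ and all multi-indices β ∈ ℕ₀^d, with constants D₁ > 0, D₂ ≥ 1, ν ≥ 0 and 0 ≤ μ < 1. Let δ ∈ [0,1] be such that s := δν + μ < 1, and let ρ : ℝ^d → (0,∞) be a measurable function with ρ(x) ≤ R(1+|x|²)^{δ/2} for all x ∈ ℝ^d (where R ≥ 1) and ρ(x) ≤ η|x| for all |x| ≥ r₀ (where η ∈ (0,1) and r₀ ≥ 1). Then there is a constant K ≥ 1, depending only on γ, R, r₀, η, ν, s and d, such that for every measurable set ω ⊂ ℝ^d satisfying |B(x,ρ(x)) ∩ ω| / |B(x,ρ(x))| ≥ γ for all x ∈ ℝ^d (with some γ ∈ (0,1)) and for every ε ∈ (0,1], one has ‖f‖²_{L²(ℝ^d)} ≤ exp(K·(1 + log(1/ε) + D₂^{4/(1−s)})) · ‖f‖²_{L²(ω)}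 + ε D₁². -/
open MeasureTheory

/-- The partial derivative in the `i`-th coordinate direction. -/
noncomputable def pderivE {d : ℕ} (i : Fin d) (f : EuclideanSpace ℝ (Fin d) → ℝ) :
    EuclideanSpace ℝ (Fin d) → ℝ :=
  fun x => fderiv ℝ f x (EuclideanSpace.single i 1)

/-- The multi-index partial derivative `∂^β f` for `β ∈ ℕ₀^d`. -/
noncomputable def mderiv {d : ℕ} (β : Fin d → ℕ) (f : EuclideanSpace ℝ (Fin d) → ℝ) :
    EuclideanSpace ℝ (Fin d) → ℝ :=
  (List.finRange d).foldr (fun i g => (pderivE i)^[β i] g) f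


/-- well separated points in a set of positive measure -/
lemma exists_sep_points (n : ℕ) (h : ℝ) (hh : 0 ≤ h) : ∀ (S : Set ℝ), S ⊆ Set.Icc 0 1 →
    ENNReal.ofReal (n * h) < volume S →
    ∃ t : ℕ → ℝ, (∀ i ≤ n, t i ∈ S) ∧ ∀ i < n, t i + h ≤ t (i + 1) := by
  induction n with
  | zero =>
    intro S hS hv
    have : S.Nonempty := by
      by_contra hne
      rw [Set.not_nonempty_iff_eq_empty] at hne
      simp [hne] at hv
    obtain ⟨x, hx⟩ := this
    exact ⟨fun _ => x, fun _ _ => hx, fun i hi => absurd hi (by omega)⟩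
  | succ n ih =>
    intro S hS hv
    have hfin : volume S ≠ ⊤ := by
      refine ne_top_of_le_ne_top ?_ (measure_mono hS)
      simp
    have hne : S.Nonempty := by
      by_contra hne
      rw [Set.not_nonempty_iff_eq_empty] at hne
      simp [hne] at hv
    have hbd : BddBelow S := ⟨0, fun x hx => (hS hx).1⟩
    have hv' : ((n + 1 : ℕ) : ℝ) * h < (volume S).toReal := by
      rwa [ENNReal.ofReal_lt_iff_lt_toReal (by positivity) hfin] at hv
    obtain ⟨x, hx, hxlt⟩ := exists_lt_of_csInf_lt hne
      (show sInf S < sInf S + ((volume S).toReal - ((n + 1 : ℕ) : ℝ) * h) by linarith)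
    have hsub : S ⊆ Set.Ico (sInf S) (x + h) ∪ (S ∩ Set.Ici (x + h)) := by
      intro y hy
      by_cases hyx : y < x + h
      · exact Or.inl ⟨csInf_le hbd hy, hyx⟩
      · exact Or.inr ⟨hy, not_lt.mp hyx⟩
    have hfin2 : volume (S ∩ Set.Ici (x + h)) ≠ ⊤ :=
      ne_top_of_le_ne_top hfin (measure_mono Set.inter_subset_left)
    have hxi : sInf S ≤ x := csInf_le hbd hx
    have h1 : (volume S).toReal ≤ (x + h - sInf S) + (volume (S ∩ Set.Ici (x + h))).toReal := by
      have := (measure_mono (μ := volume) hsub).trans (measure_union_le _ _)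
      rw [Real.volume_Ico] at this
      have h2 := ENNReal.toReal_mono (by simp [hfin2]) this
      rwa [ENNReal.toReal_add (by simp) hfin2, ENNReal.toReal_ofReal (by linarith)] at h2
    obtain ⟨t, ht1, ht2⟩ := ih (S ∩ Set.Ici (x + h)) (Set.inter_subset_left.trans hS) (by
      rw [ENNReal.ofReal_lt_iff_lt_toReal (by positivity) hfin2]
      push_cast at hxlt
      linarith)
    refine ⟨fun i => Nat.casesOn i x t, ?_, ?_⟩
    · intro i hi
      cases i with
      | zero => exact hx
      | succ i => exact (ht1 i (by omega)).1
    · intro i hi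
      cases i with
      | zero => exact (ht1 0 (by omega)).2
      | succ i => exact ht2 i (by omega)

lemma sep_of_consec (n : ℕ) (h : ℝ) (t : ℕ → ℝ)
    (ht : ∀ i < n, t i + h ≤ t (i + 1)) (i k : ℕ) (hk : i + k ≤ n) :
    (k : ℝ) * h ≤ t (i + k) - t i := by
  induction k with
  | zero => simp
  | succ k ih =>
    have h1 := ih (by omega)
    have h2 := ht (i + k) (by omega)
    push_cast
    rw [show i + (k + 1) = i + k + 1 by ring]
    linarith

lemma prod_abs_sub (n j : ℕ) (hj : j ≤ n) :
    ∏ k ∈ (Finset.range (n + 1)).erase j, |(j : ℝ) - k| = (j.factorial : ℝ) * (n - j).factorial := by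
  have h1 : (Finset.range (n + 1)).erase j = Finset.range j ∪ Finset.Ico (j + 1) (n + 1) := by
    ext k; simp; omega
  have h2 : Disjoint (Finset.range j) (Finset.Ico (j + 1) (n + 1)) := by
    rw [Finset.disjoint_left]; intro k; simp; omega
  rw [h1, Finset.prod_union h2]
  congr 1
  · rw [← Finset.prod_range_add_one_eq_factorial, ← Finset.prod_range_reflect]
    push_cast
    refine Finset.prod_congr rfl fun k hk => ?_
    rw [Finset.mem_range] at hk
    have : ((j - 1 - k : ℕ) : ℝ) = j - 1 - k := by
      rw [Nat.cast_sub (by omega), Nat.cast_sub (by omega)]; simp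
    rw [this, abs_of_nonneg]
    · ring
    · have : (k : ℝ) + 1 ≤ j := by exact_mod_cast hk
      linarith
  · rw [Finset.prod_Ico_eq_prod_range, ← Finset.prod_range_add_one_eq_factorial]
    push_cast
    refine Finset.prod_congr rfl fun k hk => ?_
    rw [abs_of_nonpos (by push_cast; linarith [(Nat.cast_nonneg k : (0:ℝ) ≤ k)])]
    ring

lemma remez_points (n : ℕ) (P : Polynomial ℝ) (hP : P.degree < (n + 1 : ℕ)) (h : ℝ) (hh : 0 < h)
    (t : ℕ → ℝ) (ht01 : ∀ i ≤ n, t i ∈ Set.Icc (0 : ℝ) 1)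
    (ht : ∀ i < n, t i + h ≤ t (i + 1)) (M : ℝ) (hM : ∀ i ≤ n, |P.eval (t i)| ≤ M) :
    |P.eval 0| ≤ M * ((2 / h) ^ n / n.factorial) := by
  have habs : ∀ i ≤ n, ∀ j ≤ n, |(i : ℝ) - j| * h ≤ |t i - t j| := by
    have key : ∀ i j, i ≤ j → j ≤ n → |(i : ℝ) - j| * h ≤ |t i - t j| := by
      intro i j hij hj
      obtain ⟨k, rfl⟩ := Nat.exists_eq_add_of_le hij
      have := sep_of_consec n h t ht i k hj
      rw [abs_sub_comm (t i)]
      refine le_trans ?_ (le_trans this (le_abs_self _))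
      push_cast
      rw [abs_sub_comm, show (i : ℝ) + k - i = k by ring, abs_of_nonneg (Nat.cast_nonneg k)]
    intro i hi j hj
    rcases le_total i j with hij | hij
    · exact key i j hij hj
    · rw [abs_sub_comm, abs_sub_comm (t i)]; exact key j i hij hi
  have hinj : Set.InjOn t (Finset.range (n + 1)) := by
    intro i hi j hj hij
    simp at hi hj
    by_contra hne
    have h1 := habs i (by omega) j (by omega)
    rw [hij, sub_self, abs_zero] at h1
    have : 0 < |(i : ℝ) - j| := abs_pos.mpr (sub_ne_zero.mpr (by exact_mod_cast hne))
    nlinarith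
  have hM0 : 0 ≤ M := (abs_nonneg _).trans (hM 0 (by omega))
  have heq := Lagrange.eq_interpolate (s := Finset.range (n + 1)) (v := t) (f := P) hinj
    (by simpa using hP)
  have hev : P.eval 0 = ∑ j ∈ Finset.range (n + 1), P.eval (t j) *
      (Lagrange.basis (Finset.range (n + 1)) t j).eval 0 := by
    conv_lhs => rw [heq]
    rw [Lagrange.interpolate_apply, Polynomial.eval_finsetSum]
    simp
  have hbasis : ∀ j ∈ Finset.range (n + 1), |(Lagrange.basis (Finset.range (n + 1)) t j).eval 0| ≤
      (1 / h) ^ n * (1 / ((j.factorial : ℝ) * (n - j).factorial)) := by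
    intro j hj
    have hj' : j ≤ n := by simp at hj; omega
    rw [Lagrange.basis, Polynomial.eval_prod, Finset.abs_prod, ← prod_abs_sub n j hj',
      one_div (∏ k ∈ _, _), ← Finset.prod_inv_distrib]
    have hcard : ((Finset.range (n + 1)).erase j).card = n := by
      rw [Finset.card_erase_of_mem hj]; simp
    have : (1 / h) ^ n = ∏ k ∈ (Finset.range (n + 1)).erase j, (1 / h) := by
      rw [Finset.prod_const, hcard]
    rw [this, ← Finset.prod_mul_distrib]
    refine Finset.prod_le_prod (fun _ _ => abs_nonneg _) fun k hk => ?_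
    have hk' : k ≠ j ∧ k ≤ n := by simp at hk; omega
    rw [Lagrange.basisDivisor]
    simp only [Polynomial.eval_mul, Polynomial.eval_C, Polynomial.eval_sub, Polynomial.eval_X,
      abs_mul, abs_inv, zero_sub, abs_neg]
    have h1 := habs j hj' k hk'.2
    have h2 : 0 < |(j : ℝ) - k| := abs_pos.mpr (sub_ne_zero.mpr (by exact_mod_cast hk'.1.symm))
    have h3 := ht01 k hk'.2
    rw [abs_of_nonneg h3.1]
    calc |t j - t k|⁻¹ * t k ≤ (|(j : ℝ) - k| * h)⁻¹ * 1 := by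
          gcongr
          · exact h3.1
          · exact h3.2
      _ = 1 / h * |(j : ℝ) - k|⁻¹ := by rw [mul_inv]; ring
  rw [hev]
  calc |∑ j ∈ Finset.range (n + 1), P.eval (t j) *
        (Lagrange.basis (Finset.range (n + 1)) t j).eval 0|
      ≤ ∑ j ∈ Finset.range (n + 1), M *
        ((1 / h) ^ n * (1 / ((j.factorial : ℝ) * (n - j).factorial))) := by
        refine (Finset.abs_sum_le_sum_abs _ _).trans (Finset.sum_le_sum fun j hj => ?_)
        rw [abs_mul]
        have hj' : j ≤ n := by simp at hj; omega
        exact mul_le_mul (hM j hj') (hbasis j hj) (abs_nonneg _) hM0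
    _ = M * ((1 / h) ^ n / n.factorial * ∑ j ∈ Finset.range (n + 1), (n.choose j : ℝ)) := by
        rw [Finset.mul_sum, Finset.mul_sum]
        refine Finset.sum_congr rfl fun j hj => ?_
        have hj' : j ≤ n := by simp at hj; omega
        rw [Nat.cast_choose ℝ hj']
        field_simp
    _ = M * ((2 / h) ^ n / n.factorial) := by
        have : ∑ j ∈ Finset.range (n + 1), (n.choose j : ℝ) = 2 ^ n := by
          exact_mod_cast Nat.sum_range_choose n
        rw [this, div_pow, div_pow, one_pow]
        ring

lemma remez_const (n : ℕ) (κ : ℝ) (hκ : 0 < κ) (hκ1 : κ ≤ 1) :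
    (2 / (κ / (2 * (n + 1)))) ^ n / n.factorial ≤ (12 / κ) ^ (n + 1) := by
  have h1 : (2 / (κ / (2 * (n + 1)))) ^ n / n.factorial
      = (4 / κ) ^ n * (((n + 1 : ℕ) : ℝ) ^ (n + 1) / (n + 1).factorial) := by
    rw [Nat.factorial_succ]
    push_cast
    rw [show 2 / (κ / (2 * ((n : ℝ) + 1))) = (4 / κ) * (n + 1) by field_simp; ring, mul_pow]
    field_simp
    ring
  rw [h1]
  have h2 := Real.pow_div_factorial_le_exp (x := ((n + 1 : ℕ) : ℝ)) (by positivity) (n + 1)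
  have h3 : Real.exp ((n + 1 : ℕ) : ℝ) ≤ 3 ^ (n + 1) := by
    rw [← Real.exp_one_pow]
    have := Real.exp_one_lt_d9
    gcongr
    linarith
  have h4 : 1 ≤ 4 / κ := by rw [le_div_iff₀ hκ]; linarith
  calc _ ≤ (4 / κ) ^ (n + 1) * 3 ^ (n + 1) := by
        refine mul_le_mul (pow_le_pow_right₀ h4 (by omega)) (h2.trans h3) (by positivity) (by positivity)
    _ = _ := by rw [← mul_pow]; ring

/-- the one-dimensional estimate -/
lemma one_dim (n : ℕ) (κ : ℝ) (hκ : 0 < κ) (hκ1 : κ ≤ 1) (g : ℝ → ℝ) (hg : Measurable g)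
    (P : Polynomial ℝ) (hP : P.degree < (n + 1 : ℕ)) (hP0 : P.eval 0 = g 0) (M : ℝ)
    (hM : ∀ t ∈ Set.Icc (0 : ℝ) 1, |g t - P.eval t| ≤ M) (S : Set ℝ)
    (hS : S ⊆ Set.Icc 0 1) (hSκ : ENNReal.ofReal κ ≤ volume S) :
    ENNReal.ofReal (g 0 ^ 2) ≤ ENNReal.ofReal (2 * ((12 / κ) ^ (n + 1)) ^ 2) *
      (ENNReal.ofReal (2 / κ) * (∫⁻ t in S, ENNReal.ofReal (g t ^ 2)) + ENNReal.ofReal (M ^ 2)) := by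
  set I := ∫⁻ t in S, ENNReal.ofReal (g t ^ 2) with hI
  have hM0 : 0 ≤ M := (abs_nonneg _).trans (hM 0 (by simp))
  set Λ := (12 / κ) ^ (n + 1) with hΛ
  have hΛ0 : 0 < Λ := by positivity
  by_cases hItop : I = ⊤
  · rw [hItop, ENNReal.mul_top (by simpa using by positivity), top_add, ENNReal.mul_top]
    · exact le_top
    · simp only [ne_eq, ENNReal.ofReal_eq_zero, not_le]; positivity
  have key : ∀ a : ℝ, I.toReal < a → g 0 ^ 2 ≤ 2 * Λ ^ 2 * (2 / κ * a + M ^ 2) := by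
    intro a ha
    have ha0 : 0 < a := lt_of_le_of_lt ENNReal.toReal_nonneg ha
    have hIa : I ≤ ENNReal.ofReal a := by
      rw [← ENNReal.ofReal_toReal hItop]; exact ENNReal.ofReal_le_ofReal ha.le
    have hmeas : Measurable fun t => ENNReal.ofReal (g t ^ 2) := by fun_prop
    have hcheb := mul_meas_ge_le_lintegral (μ := volume.restrict S) hmeas (ENNReal.ofReal (2 / κ * a))
    set T := {t | ENNReal.ofReal (2 / κ * a) ≤ ENNReal.ofReal (g t ^ 2)} with hT
    have hTm : MeasurableSet T := measurableSet_le measurable_const hmeas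
    rw [Measure.restrict_apply hTm] at hcheb
    have hT2 : volume (T ∩ S) ≤ ENNReal.ofReal (κ / 2) := by
      have h1 : ENNReal.ofReal (2 / κ * a) * volume (T ∩ S) ≤ ENNReal.ofReal a := hcheb.trans hIa
      have h2 : volume (T ∩ S) ≤ ENNReal.ofReal a / ENNReal.ofReal (2 / κ * a) := by
        rw [ENNReal.le_div_iff_mul_le (Or.inl (by simpa using by positivity)) (Or.inl (by simp)),
          mul_comm]
        exact h1
      rw [← ENNReal.ofReal_div_of_pos (by positivity)] at h2
      convert h2 using 2
      field_simp
    have hS' : ENNReal.ofReal (n * (κ / (2 * (n + 1)))) < volume (S \ T) := by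
      have h1 : ENNReal.ofReal κ ≤ volume (S \ T) + ENNReal.ofReal (κ / 2) := by
        refine hSκ.trans (le_trans ?_ (add_le_add_right hT2 _))
        have h0 := measure_sdiff_add_inter (μ := volume) S hTm
        rw [Set.inter_comm T S, h0]
      have h2 : ENNReal.ofReal (κ / 2) ≤ volume (S \ T) := by
        have h3 : ENNReal.ofReal κ = ENNReal.ofReal (κ / 2) + ENNReal.ofReal (κ / 2) := by
          rw [← ENNReal.ofReal_add (by positivity) (by positivity)]
          congr 1; ring
        rw [h3] at h1
        exact ENNReal.le_of_add_le_add_right ENNReal.ofReal_ne_top h1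
      refine lt_of_lt_of_le ?_ h2
      rw [ENNReal.ofReal_lt_ofReal_iff (by positivity)]
      rw [← mul_div_assoc, div_lt_div_iff₀ (by positivity) (by positivity)]
      nlinarith
    obtain ⟨t, ht1, ht2⟩ := exists_sep_points n (κ / (2 * (n + 1))) (by positivity) (S \ T)
      (Set.sdiff_subset.trans hS) hS'
    have hPt : ∀ i ≤ n, |P.eval (t i)| ≤ Real.sqrt (2 / κ * a) + M := by
      intro i hi
      have h1 := ht1 i hi
      have h2 := hM (t i) (hS h1.1)
      have h3 : |g (t i)| ≤ Real.sqrt (2 / κ * a) := by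
        apply Real.abs_le_sqrt
        have := h1.2
        simp only [hT, Set.mem_ofPred_eq, not_le] at this
        exact (ENNReal.ofReal_lt_ofReal_iff_of_nonneg (by positivity)).mp this |>.le
      have h4 : |P.eval (t i)| ≤ |g (t i)| + |g (t i) - P.eval (t i)| := by
        have := abs_sub_abs_le_abs_sub (P.eval (t i)) (g (t i))
        rw [abs_sub_comm] at this
        linarith
      linarith
    have h5 := remez_points n P hP (κ / (2 * (n + 1))) (by positivity) t
      (fun i hi => hS (ht1 i hi).1) ht2 _ hPt
    rw [hP0] at h5
    have h6 : |g 0| ≤ (Real.sqrt (2 / κ * a) + M) * Λ :=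
      h5.trans (mul_le_mul_of_nonneg_left (remez_const n κ hκ hκ1) (by positivity))
    have h7 : g 0 ^ 2 ≤ ((Real.sqrt (2 / κ * a) + M) * Λ) ^ 2 := by
      rw [← sq_abs]; gcongr
    have h8 : Real.sqrt (2 / κ * a) ^ 2 = 2 / κ * a := Real.sq_sqrt (by positivity)
    refine h7.trans ?_
    have : (Real.sqrt (2 / κ * a) + M) ^ 2 ≤ 2 * (Real.sqrt (2 / κ * a) ^ 2 + M ^ 2) := by
      nlinarith [sq_nonneg (Real.sqrt (2 / κ * a) - M)]
    rw [h8] at this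
    nlinarith [sq_nonneg Λ]
  have key2 : g 0 ^ 2 ≤ 2 * Λ ^ 2 * (2 / κ * I.toReal + M ^ 2) := by
    have hc : Filter.Tendsto (fun a : ℝ => 2 * Λ ^ 2 * (2 / κ * a + M ^ 2))
        (nhdsWithin I.toReal (Set.Ioi I.toReal)) (nhds (2 * Λ ^ 2 * (2 / κ * I.toReal + M ^ 2))) := by
      apply Filter.Tendsto.mono_left _ nhdsWithin_le_nhds
      apply Continuous.tendsto
      fun_prop
    refine ge_of_tendsto hc ?_
    filter_upwards [self_mem_nhdsWithin] with a ha using key a ha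
  have hI2 : I = ENNReal.ofReal I.toReal := (ENNReal.ofReal_toReal hItop).symm
  have hI0 : 0 ≤ I.toReal := ENNReal.toReal_nonneg
  rw [hI2, ← ENNReal.ofReal_mul (by positivity), ← ENNReal.ofReal_add (by positivity) (by positivity),
    ← ENNReal.ofReal_mul (by positivity)]
  exact ENNReal.ofReal_le_ofReal key2

lemma pderivE_smooth {d : ℕ} (i : Fin d) {f : EuclideanSpace ℝ (Fin d) → ℝ}
    (hf : ContDiff ℝ (⊤ : ℕ∞) f) : ContDiff ℝ (⊤ : ℕ∞) (pderivE i f) := by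
  unfold pderivE
  have h1 : ContDiff ℝ (⊤ : ℕ∞) (fderiv ℝ f) := hf.fderiv_right (by simp)
  exact h1.clm_apply contDiff_const

lemma pderivE_iter_smooth {d : ℕ} (i : Fin d) {f : EuclideanSpace ℝ (Fin d) → ℝ}
    (hf : ContDiff ℝ (⊤ : ℕ∞) f) (k : ℕ) : ContDiff ℝ (⊤ : ℕ∞) ((pderivE i)^[k] f) := by
  induction k with
  | zero => exact hf
  | succ k ih => rw [Function.iterate_succ_apply']; exact pderivE_smooth i ih

lemma pderivE_comm {d : ℕ} (i j : Fin d) {f : EuclideanSpace ℝ (Fin d) → ℝ}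
    (hf : ContDiff ℝ (⊤ : ℕ∞) f) : pderivE i (pderivE j f) = pderivE j (pderivE i f) := by
  have h1 : ContDiff ℝ (⊤ : ℕ∞) (fderiv ℝ f) := hf.fderiv_right (by simp)
  have h2 : Differentiable ℝ (fderiv ℝ f) := h1.differentiable (by simp)
  have key : ∀ (a b : Fin d) x, pderivE a (pderivE b f) x =
      fderiv ℝ (fderiv ℝ f) x (EuclideanSpace.single a 1) (EuclideanSpace.single b 1) := by
    intro a b x
    unfold pderivE
    rw [fderiv_clm_apply (h2 x) (by fun_prop)]
    simp
  funext x
  rw [key, key]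
  have hs : IsSymmSndFDerivAt ℝ f x := hf.contDiffAt.isSymmSndFDerivAt (by
    rw [minSmoothness_of_isRCLikeNormedField]
    exact WithTop.coe_le_coe.mpr (le_top (a := (2 : ℕ∞))))
  exact hs _ _

lemma pderivE_iter_comm {d : ℕ} (i j : Fin d) {f : EuclideanSpace ℝ (Fin d) → ℝ}
    (hf : ContDiff ℝ (⊤ : ℕ∞) f) (k : ℕ) :
    pderivE i ((pderivE j)^[k] f) = (pderivE j)^[k] (pderivE i f) := by
  induction k with
  | zero => rfl
  | succ k ih =>
    rw [Function.iterate_succ_apply', Function.iterate_succ_apply',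
      pderivE_comm i j (pderivE_iter_smooth j hf k), ih]

lemma foldr_smooth {d : ℕ} (β : Fin d → ℕ) {f : EuclideanSpace ℝ (Fin d) → ℝ}
    (hf : ContDiff ℝ (⊤ : ℕ∞) f) (L : List (Fin d)) :
    ContDiff ℝ (⊤ : ℕ∞) (L.foldr (fun i g => (pderivE i)^[β i] g) f) := by
  induction L with
  | nil => exact hf
  | cons a L ih => exact pderivE_iter_smooth a ih _

lemma foldr_update_notMem {d : ℕ} (β : Fin d → ℕ) (f : EuclideanSpace ℝ (Fin d) → ℝ)
    (i : Fin d) (c : ℕ) (L : List (Fin d)) (hi : i ∉ L) :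
    L.foldr (fun k g => (pderivE k)^[Function.update β i c k] g) f
      = L.foldr (fun k g => (pderivE k)^[β k] g) f := by
  induction L with
  | nil => rfl
  | cons a L ih =>
    simp only [List.mem_cons, not_or] at hi
    simp only [List.foldr_cons]
    rw [ih hi.2, Function.update_of_ne (Ne.symm hi.1)]

lemma foldr_pderiv {d : ℕ} (β : Fin d → ℕ) {f : EuclideanSpace ℝ (Fin d) → ℝ}
    (hf : ContDiff ℝ (⊤ : ℕ∞) f) (i : Fin d) (L : List (Fin d)) (hL : L.Nodup) (hi : i ∈ L) :
    pderivE i (L.foldr (fun k g => (pderivE k)^[β k] g) f) =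
      L.foldr (fun k g => (pderivE k)^[Function.update β i (β i + 1) k] g) f := by
  induction L with
  | nil => simp at hi
  | cons a L ih =>
    simp only [List.foldr_cons]
    rw [List.nodup_cons] at hL
    by_cases hia : i = a
    · subst hia
      rw [foldr_update_notMem _ _ _ _ _ hL.1, Function.update_self, Function.iterate_succ_apply']
    · rw [Function.update_of_ne (Ne.symm hia), pderivE_iter_comm _ _ (foldr_smooth β hf L)]
      rw [ih hL.2 (by simpa [hia] using hi)]

lemma pderivE_mderiv {d : ℕ} (β : Fin d → ℕ) {f : EuclideanSpace ℝ (Fin d) → ℝ}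
    (hf : ContDiff ℝ (⊤ : ℕ∞) f) (i : Fin d) :
    pderivE i (mderiv β f) = mderiv (Function.update β i (β i + 1)) f :=
  foldr_pderiv β hf i _ (List.nodup_finRange d) (List.mem_finRange i)

lemma mderiv_zero {d : ℕ} (f : EuclideanSpace ℝ (Fin d) → ℝ) : mderiv (fun _ => 0) f = f := by
  unfold mderiv
  induction List.finRange d with
  | nil => rfl
  | cons a L ih => simp

lemma iteratedFDeriv_eq_mderiv {d : ℕ} {f : EuclideanSpace ℝ (Fin d) → ℝ}
    (hf : ContDiff ℝ (⊤ : ℕ∞) f) (m : ℕ) (J : Fin m → Fin d) :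
    ∃ β : Fin d → ℕ, ∑ i, β i = m ∧
      ∀ z, iteratedFDeriv ℝ m f z (fun k => EuclideanSpace.single (J k) 1) = mderiv β f z := by
  induction m with
  | zero => exact ⟨fun _ => 0, by simp, fun z => by rw [mderiv_zero]; simp⟩
  | succ m ih =>
    obtain ⟨β, hβ, hz⟩ := ih (fun k => J k.succ)
    refine ⟨Function.update β (J 0) (β (J 0) + 1), ?_, fun z => ?_⟩
    · rw [Finset.sum_update_of_mem (Finset.mem_univ _)]
      have h1 := Finset.add_sum_erase Finset.univ β (Finset.mem_univ (J 0))
      rw [Finset.sdiff_singleton_eq_erase]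
      omega
    · rw [← pderivE_mderiv β hf]
      have h1 : mderiv β f = fun z => iteratedFDeriv ℝ m f z
          (fun k => EuclideanSpace.single (J k.succ) 1) := by
        funext z; rw [hz]
      rw [h1, iteratedFDeriv_succ_apply_left]
      unfold pderivE
      have hd : DifferentiableAt ℝ (iteratedFDeriv ℝ m f) z := by
        apply hf.contDiffAt.differentiableAt_iteratedFDeriv
        exact_mod_cast WithTop.coe_lt_top m
      rw [fderiv_continuousMultilinear_apply_const_apply hd]
      rfl

/-- sum of squares of all derivatives of order `m` -/
noncomputable def sqDeriv {d : ℕ} (m : ℕ) (f : EuclideanSpace ℝ (Fin d) → ℝ)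
    (z : EuclideanSpace ℝ (Fin d)) : ℝ :=
  ∑ J : Fin m → Fin d, (iteratedFDeriv ℝ m f z (fun k => EuclideanSpace.single (J k) 1)) ^ 2

lemma iteratedFDeriv_sq_le {d : ℕ} (m : ℕ) (f : EuclideanSpace ℝ (Fin d) → ℝ)
    (z v : EuclideanSpace ℝ (Fin d)) :
    (iteratedFDeriv ℝ m f z (fun _ => v)) ^ 2 ≤ ‖v‖ ^ (2 * m) * sqDeriv m f z := by
  have hv : v = ∑ i, v i • EuclideanSpace.single i (1 : ℝ) := by
    ext j
    simp [Finset.sum_apply, Pi.single_apply]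
  have h1 : iteratedFDeriv ℝ m f z (fun _ => v) = ∑ J : Fin m → Fin d, (∏ k, v (J k)) *
      iteratedFDeriv ℝ m f z (fun k => EuclideanSpace.single (J k) 1) := by
    conv_lhs => rw [hv]
    have := (iteratedFDeriv ℝ m f z).toMultilinearMap.map_sum
      (fun (_ : Fin m) (i : Fin d) => v i • EuclideanSpace.single i (1 : ℝ))
    simp only [ContinuousMultilinearMap.coe_coe] at this
    rw [this]
    refine Finset.sum_congr rfl fun J _ => ?_
    exact (iteratedFDeriv ℝ m f z).map_smul_univ (fun k => v (J k)) (fun k => EuclideanSpace.single (J k) 1)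
  rw [h1]
  refine (Finset.sum_mul_sq_le_sq_mul_sq _ _ _).trans ?_
  refine le_of_eq ?_
  unfold sqDeriv
  congr 1
  rw [pow_mul, EuclideanSpace.real_norm_sq_eq]
  have h2 := Finset.prod_univ_sum (fun _ : Fin m => (Finset.univ : Finset (Fin d))) (fun _ i => v i ^ 2)
  simp only [Finset.prod_const, Finset.card_univ, Fintype.card_fin, Fintype.piFinset_univ] at h2
  rw [h2]
  exact Finset.sum_congr rfl fun J _ => by rw [Finset.prod_pow]

lemma taylor_line {d : ℕ} {f : EuclideanSpace ℝ (Fin d) → ℝ}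
    (hf : ContDiff ℝ (⊤ : ℕ∞) f) (n : ℕ) (x v : EuclideanSpace ℝ (Fin d)) :
    ∃ P : Polynomial ℝ, P.degree < (n + 1 : ℕ) ∧ P.eval 0 = f x ∧
      ∀ t ∈ Set.Icc (0 : ℝ) 1, |f (x + t • v) - P.eval t| ≤
        1 / n.factorial * ∫ τ in (0 : ℝ)..1, |iteratedFDeriv ℝ (n + 1) f (x + τ • v) (fun _ => v)| := by
  refine ⟨∑ k ∈ Finset.range (n + 1), Polynomial.C ((k.factorial : ℝ)⁻¹ *
    iteratedFDeriv ℝ k f x (fun _ => v)) * Polynomial.X ^ k, ?_, ?_, ?_⟩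
  · refine lt_of_le_of_lt (Polynomial.degree_sum_le _ _) ?_
    rw [Finset.sup_lt_iff (by exact WithBot.bot_lt_coe _)]
    intro k hk
    refine lt_of_le_of_lt (Polynomial.degree_C_mul_X_pow_le _ _) ?_
    rw [Finset.mem_range] at hk
    exact Nat.cast_lt.mpr hk
  · rw [Polynomial.eval_finsetSum, Finset.sum_range_succ']
    simp
  · intro t ht
    set Φ : ℝ → ℝ := fun τ => iteratedFDeriv ℝ (n + 1) f (x + τ • v) (fun _ => v) with hΦ
    have hΦc : Continuous Φ := by
      have h1 : Continuous (iteratedFDeriv ℝ (n + 1) f) :=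
        hf.continuous_iteratedFDeriv (by exact_mod_cast le_top)
      have h2 : Continuous fun τ : ℝ => iteratedFDeriv ℝ (n + 1) f (x + τ • v) := by fun_prop
      exact h2.eval_const _
    have h0 := map_add_eq_sum_add_integral_iteratedFDeriv (f := f) (x := x) (y := t • v) (n := n)
      (fun s _ => hf.contDiffAt.of_le (by exact_mod_cast le_top))
    have hpow : ∀ (k : ℕ) z, iteratedFDeriv ℝ k f z (fun _ => t • v) =
        t ^ k * iteratedFDeriv ℝ k f z (fun _ => v) := by
      intro k z
      have := (iteratedFDeriv ℝ k f z).map_smul_univ (fun _ => t) (fun _ => v)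
      simpa using this
    simp only [hpow, smul_smul] at h0
    rw [h0, Polynomial.eval_finsetSum]
    have h1 : ∀ a b c : ℝ, a = c → a + b - c = b := by intro a b c h; rw [h]; ring
    rw [h1]
    · rw [smul_eq_mul, abs_mul, one_div, abs_of_nonneg (a := ((n.factorial : ℝ))⁻¹) (by positivity)]
      gcongr
      calc |∫ τ in (0 : ℝ)..1, (1 - τ) ^ n • (t ^ (n + 1) * Φ (τ * t))|
          ≤ ∫ τ in (0 : ℝ)..1, |(1 - τ) ^ n • (t ^ (n + 1) * Φ (τ * t))| :=
            intervalIntegral.abs_integral_le_integral_abs zero_le_one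
        _ ≤ ∫ τ in (0 : ℝ)..1, t * |Φ (τ * t)| := by
            apply intervalIntegral.integral_mono_on zero_le_one
            · apply Continuous.intervalIntegrable; fun_prop
            · apply Continuous.intervalIntegrable; fun_prop
            · intro τ hτ
              have ha : (1 - τ) ^ n ≤ 1 := pow_le_one₀ (by linarith [hτ.2]) (by linarith [hτ.1])
              have ha0 : 0 ≤ (1 - τ) ^ n := pow_nonneg (by linarith [hτ.2]) _
              have hb : t ^ n ≤ 1 := pow_le_one₀ ht.1 ht.2
              rw [smul_eq_mul, abs_mul, abs_mul, abs_of_nonneg ha0,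
                abs_of_nonneg (pow_nonneg ht.1 (n + 1)), pow_succ]
              have hc : 0 ≤ t ^ n := pow_nonneg ht.1 n
              have : (1 - τ) ^ n * (t ^ n * t * |Φ (τ * t)|) = ((1 - τ) ^ n * t ^ n) * (t * |Φ (τ * t)|) := by ring
              rw [this]
              have h3 : (1 - τ) ^ n * t ^ n ≤ 1 := mul_le_one₀ ha hc hb
              exact mul_le_of_le_one_left (mul_nonneg ht.1 (abs_nonneg _)) h3
        _ = ∫ τ in (0 : ℝ)..t, |Φ τ| := by
            rw [intervalIntegral.integral_const_mul]
            have := intervalIntegral.mul_integral_comp_mul_right (a := (0 : ℝ)) (b := 1) (f := fun s => |Φ s|) t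
            simpa using this
        _ ≤ ∫ τ in (0 : ℝ)..1, |Φ τ| := by
            apply intervalIntegral.integral_mono_interval le_rfl ht.1 ht.2
            · filter_upwards with s using abs_nonneg _
            · apply Continuous.intervalIntegrable; fun_prop
    · refine Finset.sum_congr rfl fun k _ => ?_
      simp; ring

/-- Estimate of a smooth function at a point by its values on a subset of a segment. -/
lemma segment_estimate {d : ℕ} {f : EuclideanSpace ℝ (Fin d) → ℝ}
    (hf : ContDiff ℝ (⊤ : ℕ∞) f) (n : ℕ) (κ : ℝ) (hκ : 0 < κ) (hκ1 : κ ≤ 1)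
    (x v : EuclideanSpace ℝ (Fin d)) (r : ℝ) (hv : ‖v‖ ≤ r) (S : Set ℝ)
    (hS : S ⊆ Set.Icc 0 1) (hSκ : ENNReal.ofReal κ ≤ volume S) :
    ENNReal.ofReal (f x ^ 2) ≤ ENNReal.ofReal (2 * ((12 / κ) ^ (n + 1)) ^ 2) *
      (ENNReal.ofReal (2 / κ) * (∫⁻ t in S, ENNReal.ofReal (f (x + t • v) ^ 2)) +
        ENNReal.ofReal (r ^ (2 * (n + 1)) / (n.factorial : ℝ) ^ 2) *
          ∫⁻ t in Set.Icc (0 : ℝ) 1, ENNReal.ofReal (sqDeriv (n + 1) f (x + t • v))) := by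
  obtain ⟨P, hP, hP0, hPt⟩ := taylor_line hf n x v
  set Φ : ℝ → ℝ := fun τ => iteratedFDeriv ℝ (n + 1) f (x + τ • v) (fun _ => v) with hΦ
  have hΦc : Continuous Φ := by
    have h1 : Continuous (iteratedFDeriv ℝ (n + 1) f) :=
      hf.continuous_iteratedFDeriv (by exact_mod_cast le_top)
    have h2 : Continuous fun τ : ℝ => iteratedFDeriv ℝ (n + 1) f (x + τ • v) := by fun_prop
    exact h2.eval_const _
  have hfc := hf.continuous
  have h1 := one_dim n κ hκ hκ1 (fun t => f (x + t • v)) (by fun_prop) P hP (by simpa using hP0) _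
    hPt S hS hSκ
  simp only [zero_smul, add_zero] at h1
  refine h1.trans ?_
  gcongr
  set c := ∫ τ in (0 : ℝ)..1, |Φ τ| with hc
  have hcs : c ^ 2 ≤ ∫ τ in (0 : ℝ)..1, Φ τ ^ 2 := by
    have h2 : 0 ≤ ∫ τ in (0 : ℝ)..1, (|Φ τ| - c) ^ 2 :=
      intervalIntegral.integral_nonneg zero_le_one fun _ _ => sq_nonneg _
    have h3 : ∫ τ in (0 : ℝ)..1, (|Φ τ| - c) ^ 2 = (∫ τ in (0 : ℝ)..1, Φ τ ^ 2) - c ^ 2 := by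
      have : ∀ τ, (|Φ τ| - c) ^ 2 = Φ τ ^ 2 - (2 * c) * |Φ τ| + c ^ 2 := by
        intro τ; rw [← sq_abs (Φ τ)]; ring
      simp only [this]
      rw [intervalIntegral.integral_add, intervalIntegral.integral_sub,
        intervalIntegral.integral_const_mul, ← hc]
      · simp; ring
      all_goals apply Continuous.intervalIntegrable; fun_prop
    linarith
  have h4 : ENNReal.ofReal (∫ τ in (0 : ℝ)..1, Φ τ ^ 2) =
      ∫⁻ τ in Set.Icc (0 : ℝ) 1, ENNReal.ofReal (Φ τ ^ 2) := by
    rw [intervalIntegral.integral_of_le zero_le_one, ← integral_Icc_eq_integral_Ioc,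
      ofReal_integral_eq_lintegral_ofReal]
    · apply Continuous.integrableOn_Icc; fun_prop
    · filter_upwards with s using sq_nonneg _
  calc ENNReal.ofReal ((1 / n.factorial * c) ^ 2)
      ≤ ENNReal.ofReal (1 / (n.factorial : ℝ) ^ 2 * ∫ τ in (0 : ℝ)..1, Φ τ ^ 2) := by
        apply ENNReal.ofReal_le_ofReal
        rw [mul_pow, div_pow, one_pow]
        gcongr
    _ = ENNReal.ofReal (1 / (n.factorial : ℝ) ^ 2) *
        ∫⁻ τ in Set.Icc (0 : ℝ) 1, ENNReal.ofReal (Φ τ ^ 2) := by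
        rw [ENNReal.ofReal_mul (by positivity), h4]
    _ ≤ ENNReal.ofReal (1 / (n.factorial : ℝ) ^ 2) *
        ∫⁻ τ in Set.Icc (0 : ℝ) 1, ENNReal.ofReal (r ^ (2 * (n + 1))) *
          ENNReal.ofReal (sqDeriv (n + 1) f (x + τ • v)) := by
        gcongr with τ
        have hr : 0 ≤ r := (norm_nonneg v).trans hv
        rw [← ENNReal.ofReal_mul (by positivity)]
        apply ENNReal.ofReal_le_ofReal
        refine (iteratedFDeriv_sq_le (n + 1) f _ v).trans ?_
        have : 0 ≤ sqDeriv (n + 1) f (x + τ • v) := Finset.sum_nonneg fun _ _ => sq_nonneg _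
        gcongr
    _ = _ := by
        rw [lintegral_const_mul' _ _ ENNReal.ofReal_ne_top, ← mul_assoc,
          ← ENNReal.ofReal_mul (by positivity)]
        congr 2
        ring

lemma lintegral_affine {d : ℕ} (H : EuclideanSpace ℝ (Fin d) → ENNReal) (hH : Measurable H)
    (a : EuclideanSpace ℝ (Fin d)) (t : ℝ) (ht : 1 / 2 ≤ t) :
    ∫⁻ y, H (a + t • y) ≤ ENNReal.ofReal (2 ^ d) * ∫⁻ z, H z := by
  have ht0 : 0 < t := by linarith
  have h1 : ∫⁻ y, H (a + t • y) = ∫⁻ z, H (a + z) ∂(Measure.map (fun y => t • y) volume) := by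
    rw [lintegral_map (by fun_prop) (by fun_prop)]
  rw [h1, Measure.map_addHaar_smul _ ht0.ne', lintegral_smul_measure, lintegral_add_left_eq_self]
  rw [smul_eq_mul]
  gcongr
  rw [abs_of_pos (by positivity), finrank_euclideanSpace_fin, ← inv_pow]
  gcongr
  rw [inv_le_comm₀ ht0 (by norm_num)]
  linarith

lemma double_integral {d : ℕ} (H : EuclideanSpace ℝ (Fin d) → ENNReal) (hH : Measurable H)
    (B : Set (EuclideanSpace ℝ (Fin d))) :
    ∫⁻ x in B, ∫⁻ y in B, ∫⁻ t in Set.Icc (0 : ℝ) 1, H (x + t • (y - x)) ≤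
      ENNReal.ofReal (2 ^ d) * volume B * ∫⁻ z, H z := by
  have hm : Measurable fun p : (EuclideanSpace ℝ (Fin d) × EuclideanSpace ℝ (Fin d)) × ℝ =>
      H (p.1.1 + p.2 • (p.1.2 - p.1.1)) := hH.comp (by fun_prop)
  have h1 : ∀ x, ∫⁻ y in B, ∫⁻ t in Set.Icc (0 : ℝ) 1, H (x + t • (y - x)) =
      ∫⁻ t in Set.Icc (0 : ℝ) 1, ∫⁻ y in B, H (x + t • (y - x)) := by
    intro x
    apply lintegral_lintegral_swap
    apply Measurable.aemeasurable
    exact hH.comp (by fun_prop)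
  simp only [h1]
  rw [lintegral_lintegral_swap]
  swap
  · apply Measurable.aemeasurable
    have : Measurable fun p : (EuclideanSpace ℝ (Fin d) × ℝ) × EuclideanSpace ℝ (Fin d) =>
        H (p.1.1 + p.1.2 • (p.2 - p.1.1)) := hH.comp (by fun_prop)
    exact this.lintegral_prod_right'
  have h2 : ∀ t ∈ Set.Icc (0 : ℝ) 1, ∫⁻ x in B, ∫⁻ y in B, H (x + t • (y - x)) ≤
      ENNReal.ofReal (2 ^ d) * volume B * ∫⁻ z, H z := by
    have key : ∀ s : ℝ, 1 / 2 ≤ s → ∀ G : EuclideanSpace ℝ (Fin d) → EuclideanSpace ℝ (Fin d) → EuclideanSpace ℝ (Fin d),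
        (∀ x y, G x y = (1 - s) • x + s • y) → ∫⁻ x in B, ∫⁻ y in B, H (G x y) ≤
        ENNReal.ofReal (2 ^ d) * volume B * ∫⁻ z, H z := by
      intro s hs G hG
      calc ∫⁻ x in B, ∫⁻ y in B, H (G x y) ≤ ∫⁻ x in B, ENNReal.ofReal (2 ^ d) * ∫⁻ z, H z := by
            apply lintegral_mono
            intro x
            simp only [hG]
            exact (setLIntegral_le_lintegral _ _).trans (lintegral_affine H hH _ s hs)
        _ = _ := by rw [setLIntegral_const]; ring
    intro t ht
    rcases le_total (1 / 2) t with h | h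
    · exact key t h (fun x y => x + t • (y - x)) (fun x y => by module)
    · rw [lintegral_lintegral_swap]
      · exact key (1 - t) (by linarith) (fun x y => y + t • (x - y)) (fun x y => by module)
      · apply Measurable.aemeasurable
        exact hH.comp (by fun_prop)
  calc _ ≤ ∫⁻ t in Set.Icc (0 : ℝ) 1, ENNReal.ofReal (2 ^ d) * volume B * ∫⁻ z, H z :=
        setLIntegral_mono' measurableSet_Icc h2
    _ = _ := by rw [setLIntegral_const]; simp

lemma fiber_lower {d : ℕ} (hd : 1 ≤ d) (γ : ℝ) (hγ0 : 0 < γ) (hγ1 : γ < 1)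
    (x₀ : EuclideanSpace ℝ (Fin d)) (r : ℝ) (E : Set (EuclideanSpace ℝ (Fin d)))
    (hE : MeasurableSet E) (hEB : E ⊆ Metric.ball x₀ r)
    (hEγ : ENNReal.ofReal γ * volume (Metric.ball x₀ r) ≤ volume E)
    (x : EuclideanSpace ℝ (Fin d)) (hx : x ∈ Metric.ball x₀ r) (t : ℝ) (ht : 1 - γ / (2 * d) ≤ t)
    (ht1 : t ≤ 1) :
    ENNReal.ofReal (γ / 2) * volume (Metric.ball x₀ r) ≤
      ∫⁻ y in Metric.ball x₀ r, E.indicator 1 (x + t • (y - x)) := by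
  set B := Metric.ball x₀ r with hB
  have hd' : (1 : ℝ) ≤ d := by exact_mod_cast hd
  have hgd : γ / (2 * d) ≤ 1 / 2 := by
    rw [div_le_div_iff₀ (by positivity) (by positivity)]; nlinarith
  have ht0 : 0 < t := by linarith
  set φ := AffineMap.homothety x t with hφ
  have hφa : ∀ y, φ y = x + t • (y - x) := by
    intro y; rw [hφ, AffineMap.homothety_apply]; simp [add_comm]
  have hBfin : volume B ≠ ⊤ := measure_ball_lt_top.ne
  have hφm : Measurable φ := by
    have : (φ : EuclideanSpace ℝ (Fin d) → EuclideanSpace ℝ (Fin d)) = fun y => x + t • (y - x) := by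
      funext y; exact hφa y
    rw [this]; fun_prop
  have hBm : MeasurableSet B := measurableSet_ball
  have h1 : ∫⁻ y in B, E.indicator 1 (x + t • (y - x)) = volume (B ∩ φ ⁻¹' E) := by
    have : ∀ y, E.indicator (1 : EuclideanSpace ℝ (Fin d) → ENNReal) (x + t • (y - x)) =
        (φ ⁻¹' E).indicator 1 y := by
      intro y; rw [← hφa]; rfl
    simp only [this]
    rw [lintegral_indicator_one (hφm hE), Measure.restrict_apply (hφm hE), Set.inter_comm]
  rw [h1]
  have hfr : Module.finrank ℝ (EuclideanSpace ℝ (Fin d)) = d := finrank_euclideanSpace_fin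
  have himg : ∀ A : Set (EuclideanSpace ℝ (Fin d)), volume (φ '' A) = ENNReal.ofReal (t ^ d) * volume A := by
    intro A
    rw [hφ, Measure.addHaar_image_homothety, hfr, abs_of_pos (by positivity)]
  have htd1 : t ^ d ≤ 1 := pow_le_one₀ ht0.le ht1
  have h2 : volume (φ '' B ∩ E) ≤ volume (B ∩ φ ⁻¹' E) := by
    rw [← Set.image_inter_preimage, himg]
    calc _ ≤ 1 * volume (B ∩ φ ⁻¹' E) := by
          gcongr
          rw [← ENNReal.ofReal_one]; exact ENNReal.ofReal_le_ofReal htd1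
      _ = _ := one_mul _
  refine le_trans ?_ h2
  have hsub : φ '' B ⊆ B := by
    rintro _ ⟨y, hy, rfl⟩
    rw [hφa]
    have := (convex_ball x₀ r) hx hy (sub_nonneg.mpr ht1) ht0.le (by ring)
    convert this using 1
    module
  have himeas : MeasurableSet (φ '' B) := by
    have : (φ : EuclideanSpace ℝ (Fin d) → EuclideanSpace ℝ (Fin d)) '' B =
        (AffineMap.homothety x t⁻¹ : EuclideanSpace ℝ (Fin d) →ᵃ[ℝ] EuclideanSpace ℝ (Fin d)) ⁻¹' B := by
      ext z
      constructor
      · rintro ⟨y, hy, rfl⟩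
        simp only [Set.mem_preimage, AffineMap.homothety_apply, hφ]
        simpa [smul_smul, ht0.ne'] using hy
      · intro hz
        refine ⟨_, hz, ?_⟩
        simp only [AffineMap.homothety_apply, hφ]
        simp [smul_smul, ht0.ne']
    rw [this]
    have hc : Continuous (AffineMap.homothety x t⁻¹ : EuclideanSpace ℝ (Fin d) →ᵃ[ℝ] EuclideanSpace ℝ (Fin d)) :=
      AffineMap.homothety_continuous _ _
    exact hc.measurable hBm
  have h3 : volume E ≤ volume (φ '' B ∩ E) + volume (B \ φ '' B) := by
    refine le_trans (measure_mono ?_) (measure_union_le _ _)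
    intro z hz
    by_cases h : z ∈ φ '' B
    · exact Or.inl ⟨h, hz⟩
    · exact Or.inr ⟨hEB hz, h⟩
  have h4 : volume (B \ φ '' B) + ENNReal.ofReal (t ^ d) * volume B = volume B := by
    have := measure_sdiff_add_inter (μ := volume) B himeas
    rwa [Set.inter_eq_right.mpr hsub, himg] at this
  have hbern : 1 - γ / 2 ≤ t ^ d := by
    have := one_add_mul_le_pow (a := -(γ / (2 * d))) (by linarith) d
    calc 1 - γ / 2 = 1 + d * (-(γ / (2 * d))) := by field_simp; ring
      _ ≤ (1 + -(γ / (2 * d))) ^ d := this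
      _ ≤ t ^ d := by
        gcongr <;> linarith
  have hf1 : volume (φ '' B ∩ E) ≠ ⊤ := ne_top_of_le_ne_top hBfin (measure_mono (Set.inter_subset_right.trans hEB))
  have hf2 : volume (B \ φ '' B) ≠ ⊤ := ne_top_of_le_ne_top hBfin (measure_mono Set.sdiff_subset)
  have h5 := ENNReal.toReal_mono (by simp [hf1, hf2]) (hEγ.trans h3)
  rw [ENNReal.toReal_add hf1 hf2, ENNReal.toReal_mul, ENNReal.toReal_ofReal hγ0.le] at h5
  have h6 := congrArg ENNReal.toReal h4
  rw [ENNReal.toReal_add hf2 (ENNReal.mul_ne_top (by simp) hBfin), ENNReal.toReal_mul,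
    ENNReal.toReal_ofReal (by positivity)] at h6
  rw [← ENNReal.toReal_le_toReal (ENNReal.mul_ne_top (by simp) hBfin) hf1, ENNReal.toReal_mul,
    ENNReal.toReal_ofReal (by positivity)]
  have h7 : 0 ≤ (volume B).toReal := ENNReal.toReal_nonneg
  nlinarith

lemma fiber_integral {d : ℕ} (hd : 1 ≤ d) (γ : ℝ) (hγ0 : 0 < γ) (hγ1 : γ < 1)
    (x₀ : EuclideanSpace ℝ (Fin d)) (r : ℝ) (E : Set (EuclideanSpace ℝ (Fin d)))
    (hE : MeasurableSet E) (hEB : E ⊆ Metric.ball x₀ r)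
    (hEγ : ENNReal.ofReal γ * volume (Metric.ball x₀ r) ≤ volume E)
    (x : EuclideanSpace ℝ (Fin d)) (hx : x ∈ Metric.ball x₀ r) :
    ENNReal.ofReal (γ ^ 2 / (4 * d)) * volume (Metric.ball x₀ r) ≤
      ∫⁻ y in Metric.ball x₀ r, ∫⁻ t in Set.Icc (0 : ℝ) 1, E.indicator 1 (x + t • (y - x)) := by
  have hd' : (1 : ℝ) ≤ d := by exact_mod_cast hd
  have hgd : γ / (2 * d) ≤ 1 / 2 := by
    rw [div_le_div_iff₀ (by positivity) (by positivity)]; nlinarith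
  rw [lintegral_lintegral_swap]
  swap
  · apply Measurable.aemeasurable
    have : Measurable (E.indicator (1 : EuclideanSpace ℝ (Fin d) → ENNReal)) := measurable_one.indicator hE
    exact this.comp (by fun_prop)
  calc _ = ∫⁻ t in Set.Icc (1 - γ / (2 * d)) 1, ENNReal.ofReal (γ / 2) * volume (Metric.ball x₀ r) := by
        rw [setLIntegral_const, Real.volume_Icc, mul_right_comm, ← ENNReal.ofReal_mul (by positivity)]
        congr 2
        field_simp; ring
    _ ≤ ∫⁻ t in Set.Icc (1 - γ / (2 * d)) 1, ∫⁻ y in Metric.ball x₀ r, E.indicator 1 (x + t • (y - x)) :=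
        setLIntegral_mono' measurableSet_Icc fun t ht =>
          fiber_lower hd γ hγ0 hγ1 x₀ r E hE hEB hEγ x hx t ht.1 ht.2
    _ ≤ _ := lintegral_mono_set (Set.Icc_subset_Icc (by linarith) le_rfl)

lemma sqDeriv_continuous {d : ℕ} {f : EuclideanSpace ℝ (Fin d) → ℝ}
    (hf : ContDiff ℝ (⊤ : ℕ∞) f) (m : ℕ) : Continuous (sqDeriv m f) := by
  unfold sqDeriv
  have h1 : Continuous (iteratedFDeriv ℝ m f) :=
    hf.continuous_iteratedFDeriv (by exact_mod_cast le_top)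
  refine continuous_finsetSum _ fun J _ => ?_
  exact (h1.eval_const _).pow 2

lemma ball_estimate {d : ℕ} (hd : 1 ≤ d) (γ : ℝ) (hγ0 : 0 < γ) (hγ1 : γ < 1)
    (κ : ℝ) (hκ : κ = γ ^ 2 / (8 * d)) {f : EuclideanSpace ℝ (Fin d) → ℝ}
    (hf : ContDiff ℝ (⊤ : ℕ∞) f) (n : ℕ)
    (x₀ : EuclideanSpace ℝ (Fin d)) (r : ℝ) (hr : 0 < r) (E : Set (EuclideanSpace ℝ (Fin d)))
    (hE : MeasurableSet E) (hEB : E ⊆ Metric.ball x₀ r)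
    (hEγ : ENNReal.ofReal γ * volume (Metric.ball x₀ r) ≤ volume E) :
    ∫⁻ x in Metric.ball x₀ r, ENNReal.ofReal (f x ^ 2) ≤
      ENNReal.ofReal (2 ^ d / κ * (2 * ((12 / κ) ^ (n + 1)) ^ 2) * (2 / κ)) *
      ((∫⁻ x in E, ENNReal.ofReal (f x ^ 2)) +
        ENNReal.ofReal ((2 * r) ^ (2 * (n + 1)) / (n.factorial : ℝ) ^ 2) *
          ∫⁻ x in Metric.ball x₀ r, ENNReal.ofReal (sqDeriv (n + 1) f x)) := by
  set B := Metric.ball x₀ r with hB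
  have hd' : (1 : ℝ) ≤ d := by exact_mod_cast hd
  have hκ0 : 0 < κ := by rw [hκ]; positivity
  have hκ1 : κ ≤ 1 := by
    rw [hκ, div_le_one (by positivity)]; nlinarith
  have hBm : MeasurableSet B := measurableSet_ball
  have hBfin : volume B ≠ ⊤ := measure_ball_lt_top.ne
  have hBpos : volume B ≠ 0 := (Metric.measure_ball_pos volume x₀ hr).ne'
  have hfc := hf.continuous
  have hG := sqDeriv_continuous hf (n + 1)
  set F : EuclideanSpace ℝ (Fin d) → ENNReal := fun x => ENNReal.ofReal (f x ^ 2) with hF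
  set G : EuclideanSpace ℝ (Fin d) → ENNReal := fun x => ENNReal.ofReal (sqDeriv (n + 1) f x) with hGdef
  have hFm : Measurable F := by fun_prop
  have hGm : Measurable G := by fun_prop
  set C1 := ENNReal.ofReal (2 * ((12 / κ) ^ (n + 1)) ^ 2) with hC1
  set c := ENNReal.ofReal ((2 * r) ^ (2 * (n + 1)) / (n.factorial : ℝ) ^ 2) with hc
  set H : EuclideanSpace ℝ (Fin d) → ENNReal := fun z =>
    C1 * (ENNReal.ofReal (2 / κ) * E.indicator F z + c * B.indicator G z) with hH
  have hEF : Measurable (E.indicator F) := hFm.indicator hE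
  have hBG : Measurable (B.indicator G) := hGm.indicator hBm
  have hHm : Measurable H := by fun_prop
  have hE1 : Measurable (E.indicator (1 : EuclideanSpace ℝ (Fin d) → ENNReal)) :=
    measurable_one.indicator hE
  have hlin : ∀ x y : EuclideanSpace ℝ (Fin d), Measurable fun t : ℝ => x + t • (y - x) := by
    intro x y; fun_prop
  -- pointwise bound
  have hpt : ∀ x ∈ B, ENNReal.ofReal κ * volume B * F x ≤
      ∫⁻ y in B, ∫⁻ t in Set.Icc (0 : ℝ) 1, H (x + t • (y - x)) := by
    intro x hx
    set σ : EuclideanSpace ℝ (Fin d) → ENNReal := fun y =>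
      ∫⁻ t in Set.Icc (0 : ℝ) 1, E.indicator 1 (x + t • (y - x)) with hσ
    have hσm : Measurable σ := by
      have : Measurable fun p : EuclideanSpace ℝ (Fin d) × ℝ =>
        E.indicator (1 : EuclideanSpace ℝ (Fin d) → ENNReal) (x + p.2 • (p.1 - x)) := hE1.comp (by fun_prop)
      exact this.lintegral_prod_right'
    have hσS : ∀ y, σ y = volume (Set.Icc (0 : ℝ) 1 ∩ {t | x + t • (y - x) ∈ E}) := by
      intro y
      have hm : MeasurableSet {t : ℝ | x + t • (y - x) ∈ E} := (hlin x y) hE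
      have : σ y = ∫⁻ t in Set.Icc (0 : ℝ) 1, {t : ℝ | x + t • (y - x) ∈ E}.indicator 1 t := rfl
      rw [this, lintegral_indicator_one hm, Measure.restrict_apply hm, Set.inter_comm]
    have hσ1 : ∀ y, σ y ≤ 1 := by
      intro y
      rw [hσS]
      refine (measure_mono Set.inter_subset_left).trans ?_
      simp
    set Y := {y | ENNReal.ofReal κ ≤ σ y} with hY
    have hYm : MeasurableSet Y := measurableSet_le measurable_const hσm
    have hYv : ENNReal.ofReal κ * volume B ≤ volume (Y ∩ B) := by
      have h1 := fiber_integral hd γ hγ0 hγ1 x₀ r E hE hEB hEγ x hx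
      have h2 : ∫⁻ y in B, σ y ≤ volume (Y ∩ B) + ENNReal.ofReal κ * volume B := by
        calc ∫⁻ y in B, σ y ≤ ∫⁻ y in B, (Y.indicator 1 y + ENNReal.ofReal κ) := by
              apply lintegral_mono
              intro y
              by_cases hy : y ∈ Y
              · simp only [Set.indicator_of_mem hy, Pi.one_apply]
                exact (hσ1 y).trans le_self_add
              · simp only [Set.indicator_of_notMem hy, zero_add]
                exact (not_le.mp hy).le
          _ = _ := by
              rw [lintegral_add_right _ measurable_const, lintegral_indicator_one hYm,
                Measure.restrict_apply hYm, setLIntegral_const]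
      have h3 : ENNReal.ofReal (γ ^ 2 / (4 * d)) = ENNReal.ofReal κ + ENNReal.ofReal κ := by
        rw [← ENNReal.ofReal_add hκ0.le hκ0.le, hκ]
        congr 1
        field_simp; ring
      rw [h3, add_mul] at h1
      exact ENNReal.le_of_add_le_add_right (ENNReal.mul_ne_top (by simp) hBfin) (h1.trans h2)
    calc ENNReal.ofReal κ * volume B * F x ≤ volume (Y ∩ B) * F x := by gcongr
      _ = ∫⁻ y in Y ∩ B, F x := by rw [setLIntegral_const, mul_comm]
      _ ≤ ∫⁻ y in Y ∩ B, ∫⁻ t in Set.Icc (0 : ℝ) 1, H (x + t • (y - x)) := by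
          refine setLIntegral_mono' (hYm.inter hBm) fun y hy => ?_
          have hv : ‖y - x‖ ≤ 2 * r := by
            have h1 : dist y x₀ < r := hy.2
            have h2 : dist x x₀ < r := hx
            rw [← dist_eq_norm]
            linarith [dist_triangle_right y x x₀]
          have hS := hy.1
          simp only [hY, Set.mem_ofPred_eq, hσS] at hS
          have h1 := segment_estimate hf n κ hκ0 hκ1 x (y - x) (2 * r) hv _ Set.inter_subset_left hS
          refine h1.trans (le_of_eq ?_)
          have hm : MeasurableSet {t : ℝ | x + t • (y - x) ∈ E} := (hlin x y) hE
          have e1 : ∫⁻ t in Set.Icc (0 : ℝ) 1 ∩ {t | x + t • (y - x) ∈ E},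
              ENNReal.ofReal (f (x + t • (y - x)) ^ 2) =
              ∫⁻ t in Set.Icc (0 : ℝ) 1, E.indicator F (x + t • (y - x)) := by
            rw [Set.inter_comm, ← Measure.restrict_restrict hm, ← lintegral_indicator hm]
            rfl
          have e2 : ∫⁻ t in Set.Icc (0 : ℝ) 1, ENNReal.ofReal (sqDeriv (n + 1) f (x + t • (y - x))) =
              ∫⁻ t in Set.Icc (0 : ℝ) 1, B.indicator G (x + t • (y - x)) := by
            refine setLIntegral_congr_fun measurableSet_Icc fun t ht => ?_
            have : x + t • (y - x) ∈ B := by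
              have := (convex_ball x₀ r) hx hy.2 (sub_nonneg.mpr ht.2) ht.1 (by ring)
              convert this using 1
              module
            simp only [Set.indicator_of_mem this, hGdef]
          rw [e1, e2]
          have m1 : Measurable fun t : ℝ => E.indicator F (x + t • (y - x)) := hEF.comp (hlin x y)
          have m2 : Measurable fun t : ℝ => B.indicator G (x + t • (y - x)) := hBG.comp (hlin x y)
          simp only [hH]
          rw [lintegral_const_mul' _ _ ENNReal.ofReal_ne_top, lintegral_add_left (by fun_prop),
            lintegral_const_mul' _ _ ENNReal.ofReal_ne_top, lintegral_const_mul' _ _ ENNReal.ofReal_ne_top]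
      _ ≤ _ := lintegral_mono_set Set.inter_subset_right
  have h1 : ENNReal.ofReal κ * volume B * ∫⁻ x in B, F x ≤
      ENNReal.ofReal (2 ^ d) * volume B * ∫⁻ z, H z := by
    rw [← lintegral_const_mul' _ _ (ENNReal.mul_ne_top ENNReal.ofReal_ne_top hBfin)]
    exact (setLIntegral_mono' hBm hpt).trans (double_integral H hHm B)
  have h2 : ENNReal.ofReal κ * ∫⁻ x in B, F x ≤ ENNReal.ofReal (2 ^ d) * ∫⁻ z, H z := by
    rw [mul_right_comm, mul_right_comm (ENNReal.ofReal (2 ^ d))] at h1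
    exact (ENNReal.mul_le_mul_iff_left hBpos hBfin).mp h1
  have h3 : ∫⁻ x in B, F x ≤ ENNReal.ofReal (2 ^ d / κ) * ∫⁻ z, H z := by
    have e : ENNReal.ofReal (1 / κ) * ENNReal.ofReal κ = 1 := by
      rw [← ENNReal.ofReal_mul (by positivity)]
      simp [hκ0.ne']
    calc ∫⁻ x in B, F x = ENNReal.ofReal (1 / κ) * (ENNReal.ofReal κ * ∫⁻ x in B, F x) := by
          rw [← mul_assoc, e, one_mul]
      _ ≤ ENNReal.ofReal (1 / κ) * (ENNReal.ofReal (2 ^ d) * ∫⁻ z, H z) := by gcongr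
      _ = _ := by
          rw [← mul_assoc, ← ENNReal.ofReal_mul (by positivity)]
          congr 2; ring
  have h4 : ∫⁻ z, H z = C1 * (ENNReal.ofReal (2 / κ) * (∫⁻ x in E, F x) + c * ∫⁻ x in B, G x) := by
    simp only [hH]
    rw [lintegral_const_mul' _ _ ENNReal.ofReal_ne_top, lintegral_add_left (by fun_prop),
      lintegral_const_mul' _ _ ENNReal.ofReal_ne_top, lintegral_const_mul' _ _ ENNReal.ofReal_ne_top,
      lintegral_indicator hE, lintegral_indicator hBm]
  refine h3.trans ?_
  rw [h4, ENNReal.ofReal_mul (by positivity), ENNReal.ofReal_mul (by positivity), mul_assoc, mul_assoc]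
  gcongr
  rw [mul_add]
  refine add_le_add le_rfl ?_
  have : (1 : ENNReal) ≤ ENNReal.ofReal (2 / κ) := by
    rw [← ENNReal.ofReal_one]
    apply ENNReal.ofReal_le_ofReal
    rw [le_div_iff₀ hκ0]; linarith
  calc _ = 1 * (c * ∫⁻ x in B, G x) := (one_mul _).symm
    _ ≤ _ := by gcongr

lemma covering_estimate (d : ℕ) : ∃ N : ℕ, ∀ (ρ : EuclideanSpace ℝ (Fin d) → ℝ),
    (∀ x, 0 < ρ x) → (∀ L : ℝ, ∃ M : ℝ, ∀ x, ‖x‖ < L → ρ x ≤ M) →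
    ∀ (F G : EuclideanSpace ℝ (Fin d) → ENNReal) (A : ENNReal)
      (ω : Set (EuclideanSpace ℝ (Fin d))), MeasurableSet ω →
    (∀ x, ∫⁻ y in Metric.ball x (ρ x), F y ≤
      A * ((∫⁻ y in Metric.ball x (ρ x) ∩ ω, F y) + ∫⁻ y in Metric.ball x (ρ x), G y)) →
    ∫⁻ y, F y ≤ N * (A * ((∫⁻ y in ω, F y) + ∫⁻ y, G y)) := by
  obtain ⟨N, τ, hτ, hN⟩ :=
    HasBesicovitchCovering.no_satelliteConfig (α := EuclideanSpace ℝ (Fin d))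
  refine ⟨N, fun ρ hρ hM F G A ω hω h => ?_⟩
  have key : ∀ L : ℕ, ∫⁻ y in Metric.ball (0 : EuclideanSpace ℝ (Fin d)) (L : ℝ), F y ≤
      N * (A * ((∫⁻ y in ω, F y) + ∫⁻ y, G y)) := by
    intro L
    obtain ⟨M, hM⟩ := hM L
    let q : Besicovitch.BallPackage (Metric.ball (0 : EuclideanSpace ℝ (Fin d)) (L : ℝ))
        (EuclideanSpace ℝ (Fin d)) :=
      { c := fun b => b.1
        r := fun b => ρ b.1
        rpos := fun b => hρ b.1
        r_bound := M
        r_le := fun b => hM b.1 (mem_ball_zero_iff.mp b.2) }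
    obtain ⟨s, hs, hcov⟩ := Besicovitch.exist_disjoint_covering_families hτ hN q
    have hs' : ∀ i, (s i).PairwiseDisjoint fun j => Metric.ball j.1 (ρ j.1) := fun i =>
      (hs i).mono fun j => Metric.ball_subset_closedBall
    have hc : ∀ i, (s i).Countable := fun i =>
      (hs' i).countable_of_isOpen (fun _ _ => Metric.isOpen_ball)
        (fun j _ => Metric.nonempty_ball.2 (hρ _))
    have hi : ∀ i, ∫⁻ y in ⋃ j ∈ s i, Metric.ball j.1 (ρ j.1), F y ≤
        A * ((∫⁻ y in ω, F y) + ∫⁻ y, G y) := by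
      intro i
      rw [lintegral_biUnion (hc i) (fun _ _ => Metric.isOpen_ball.measurableSet) (hs' i)]
      have hs'' : (s i).PairwiseDisjoint fun j => Metric.ball j.1 (ρ j.1) ∩ ω :=
        (hs' i).mono fun j => Set.inter_subset_left
      calc _ ≤ ∑' j : s i, A * ((∫⁻ y in Metric.ball j.1.1 (ρ j.1.1) ∩ ω, F y) +
              ∫⁻ y in Metric.ball j.1.1 (ρ j.1.1), G y) := ENNReal.tsum_le_tsum fun j => h _
        _ = A * ((∫⁻ y in ⋃ j ∈ s i, (Metric.ball j.1 (ρ j.1) ∩ ω), F y) +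
              ∫⁻ y in ⋃ j ∈ s i, Metric.ball j.1 (ρ j.1), G y) := by
            rw [ENNReal.tsum_mul_left, ENNReal.tsum_add,
              lintegral_biUnion (hc i) (fun _ _ => Metric.isOpen_ball.measurableSet) (hs' i),
              lintegral_biUnion (hc i)
                (fun _ _ => Metric.isOpen_ball.measurableSet.inter hω) hs'']
        _ ≤ _ := by
            refine mul_le_mul_right (add_le_add ?_ ?_) _
            · exact lintegral_mono_set (Set.iUnion₂_subset fun j _ => Set.inter_subset_right)
            · exact setLIntegral_le_lintegral _ _
    calc _ ≤ ∫⁻ y in ⋃ i, ⋃ j ∈ s i, Metric.ball j.1 (ρ j.1), F y := by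
          refine lintegral_mono_set (fun x hx => hcov ⟨⟨x, hx⟩, rfl⟩)
      _ ≤ ∑' i, ∫⁻ y in ⋃ j ∈ s i, Metric.ball j.1 (ρ j.1), F y := lintegral_iUnion_le _ _
      _ = ∑ i, ∫⁻ y in ⋃ j ∈ s i, Metric.ball j.1 (ρ j.1), F y := tsum_fintype _
      _ ≤ ∑ i : Fin N, A * ((∫⁻ y in ω, F y) + ∫⁻ y, G y) := Finset.sum_le_sum fun i _ => hi i
      _ = _ := by simp
  have hU : ⋃ L : ℕ, Metric.ball (0 : EuclideanSpace ℝ (Fin d)) (L : ℝ) = Set.univ :=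
    Metric.iUnion_ball_nat 0
  rw [← setLIntegral_univ, ← hU, setLIntegral_iUnion_of_directed]
  · exact iSup_le key
  · exact directed_of_isDirected_le fun a b hab => Metric.ball_subset_ball (by exact_mod_cast hab)

/-- Comparability of the weight on the balls. -/
lemma weight_compare {V : Type*} [NormedAddCommGroup V] (R δ η r₀ : ℝ)
    (hR : 1 ≤ R) (hη0 : 0 < η) (hη1 : η < 1) (C0 : ℝ) (hC0 : C0 = (1 + r₀ ^ 2) / (1 - η) ^ 2)
    (ρ : V → ℝ) (hρ : ∀ x, 0 < ρ x)
    (h1 : ∀ x, ρ x ≤ R * (1 + ‖x‖ ^ 2) ^ (δ / 2))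
    (h2 : ∀ x, r₀ ≤ ‖x‖ → ρ x ≤ η * ‖x‖) (m p : ℕ) (hp : δ * m ≤ p) (hpm : p ≤ m) (x y : V)
    (hy : y ∈ Metric.ball x (ρ x)) :
    (2 * ρ x) ^ (2 * m) ≤ (4 * R ^ 2 * C0) ^ m * (1 + ‖y‖ ^ 2) ^ p := by
  have hη : 0 < 1 - η := by linarith
  have hη' : (1 - η) ^ 2 ≤ 1 := by nlinarith
  have hC1 : 1 ≤ C0 := by
    rw [hC0, le_div_iff₀ (by positivity)]; nlinarith [sq_nonneg r₀]
  have hxy : 1 + ‖x‖ ^ 2 ≤ C0 * (1 + ‖y‖ ^ 2) := by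
    rw [hC0, div_mul_eq_mul_div, le_div_iff₀ (by positivity)]
    by_cases hx : r₀ ≤ ‖x‖
    · have h3 : (1 - η) * ‖x‖ ≤ ‖y‖ := by
        have := h2 x hx
        have h4 : ‖x‖ ≤ ‖y‖ + ‖y - x‖ := by
          have := norm_sub_le y (y - x); simpa using this
        rw [Metric.mem_ball, dist_eq_norm] at hy
        linarith
      have h5 : (1 - η) ^ 2 * ‖x‖ ^ 2 ≤ ‖y‖ ^ 2 := by
        rw [← mul_pow]; exact pow_le_pow_left₀ (by positivity) h3 2
      nlinarith [mul_nonneg (sq_nonneg r₀) (sq_nonneg ‖y‖), sq_nonneg r₀, sq_nonneg ‖y‖]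
    · push Not at hx
      have h5 : ‖x‖ ^ 2 ≤ r₀ ^ 2 := pow_le_pow_left₀ (norm_nonneg _) hx.le 2
      calc (1 + ‖x‖ ^ 2) * (1 - η) ^ 2 ≤ (1 + r₀ ^ 2) * 1 := by gcongr
        _ ≤ _ := by gcongr; nlinarith [sq_nonneg ‖y‖]
  have hx1 : (1 : ℝ) ≤ 1 + ‖x‖ ^ 2 := by nlinarith [sq_nonneg ‖x‖]
  calc (2 * ρ x) ^ (2 * m) ≤ (2 * (R * (1 + ‖x‖ ^ 2) ^ (δ / 2))) ^ (2 * m) := by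
        have := (hρ x).le
        gcongr; exact h1 x
    _ = (4 * R ^ 2) ^ m * (1 + ‖x‖ ^ 2) ^ (δ * m) := by
        rw [mul_pow, mul_pow, ← Real.rpow_natCast ((1 + ‖x‖ ^ 2) ^ (δ / 2)), ← Real.rpow_mul (by positivity),
          mul_pow, pow_mul, pow_mul, ← mul_assoc]
        congr 2
        · norm_num
        · push_cast; ring
    _ ≤ (4 * R ^ 2) ^ m * (1 + ‖x‖ ^ 2) ^ p := by
        rw [← Real.rpow_natCast (1 + ‖x‖ ^ 2) p]
        gcongr
    _ ≤ (4 * R ^ 2) ^ m * (C0 * (1 + ‖y‖ ^ 2)) ^ p := by gcongr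
    _ = (4 * R ^ 2) ^ m * (C0 ^ p * (1 + ‖y‖ ^ 2) ^ p) := by rw [mul_pow C0]
    _ ≤ (4 * R ^ 2) ^ m * (C0 ^ m * (1 + ‖y‖ ^ 2) ^ p) := by gcongr
    _ = _ := by rw [mul_pow (4 * R ^ 2)]; ring

lemma eLpNorm_two_sq {α : Type*} [MeasurableSpace α] (μ : Measure α) (f : α → ℝ) :
    (eLpNorm f 2 μ) ^ 2 = ∫⁻ x, ENNReal.ofReal (f x ^ 2) ∂μ := by
  have := eLpNorm_nnreal_pow_eq_lintegral (μ := μ) (f := f) (p := 2) (by norm_num)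
  have e : ((2 : NNReal) : ENNReal) = 2 := by norm_num
  rw [e] at this
  have e2 : ((2 : NNReal) : ℝ) = ((2 : ℕ) : ℝ) := by norm_num
  rw [e2, ENNReal.rpow_natCast] at this
  rw [this]
  congr 1; ext x
  rw [ENNReal.rpow_natCast, ← ofReal_norm, ← ENNReal.ofReal_pow (norm_nonneg _)]
  simp

lemma weighted_deriv_bound {d : ℕ} {f : EuclideanSpace ℝ (Fin d) → ℝ} (D₁ D₂ ν μ : ℝ)
    (hD₁ : 0 < D₁) (hD₂ : 1 ≤ D₂)
    (hf : ContDiff ℝ (⊤ : ℕ∞) f)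
    (h : ∀ (n : ℕ) (β : Fin d → ℕ),
          eLpNorm (fun x => (1 + ‖x‖ ^ 2) ^ ((n : ℝ) / 2) * mderiv β f x) 2 volume ≤
            ENNReal.ofReal (D₁ * D₂ ^ (n + ∑ i, β i) *
              (n.factorial : ℝ) ^ ν * (((∑ i, β i).factorial : ℝ)) ^ μ)) (m p : ℕ) :
    ∫⁻ x, ENNReal.ofReal ((1 + ‖x‖ ^ 2) ^ p * sqDeriv m f x) ≤
      ENNReal.ofReal ((d : ℝ) ^ m * (D₁ * D₂ ^ (p + m) * (p.factorial : ℝ) ^ ν *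
        (m.factorial : ℝ) ^ μ) ^ 2) := by
  choose β hβ hβ2 using fun J : Fin m → Fin d => iteratedFDeriv_eq_mderiv hf m J
  have e : ∀ x, ENNReal.ofReal ((1 + ‖x‖ ^ 2) ^ p * sqDeriv m f x) =
      ∑ J : Fin m → Fin d, ENNReal.ofReal (((1 + ‖x‖ ^ 2) ^ ((p : ℝ) / 2) * mderiv (β J) f x) ^ 2) := by
    intro x
    rw [← ENNReal.ofReal_sum_of_nonneg (fun _ _ => sq_nonneg _), sqDeriv, Finset.mul_sum]
    congr 1
    refine Finset.sum_congr rfl fun J _ => ?_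
    rw [hβ2, mul_pow, ← Real.rpow_natCast ((1 + ‖x‖ ^ 2) ^ ((p : ℝ) / 2)), ← Real.rpow_mul (by positivity)]
    congr 1
    rw [← Real.rpow_natCast]; congr 1; push_cast; ring
  simp_rw [e]
  have hc : ∀ J : Fin m → Fin d, Continuous (mderiv (β J) f) := by
    intro J
    have h1 : Continuous (iteratedFDeriv ℝ m f) :=
      hf.continuous_iteratedFDeriv (by exact_mod_cast le_top)
    have : mderiv (β J) f = fun z => iteratedFDeriv ℝ m f z (fun k => EuclideanSpace.single (J k) 1) := by
      ext z; rw [hβ2]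
    rw [this]
    fun_prop
  rw [lintegral_finsetSum' _ (fun J _ => ?_)]
  · calc _ ≤ ∑ J : Fin m → Fin d, ENNReal.ofReal ((D₁ * D₂ ^ (p + m) * (p.factorial : ℝ) ^ ν *
        (m.factorial : ℝ) ^ μ) ^ 2) := by
          refine Finset.sum_le_sum fun J _ => ?_
          rw [← eLpNorm_two_sq, ENNReal.ofReal_pow (by positivity)]
          have := h p (β J)
          rw [hβ J] at this
          gcongr
      _ = _ := by
          rw [ENNReal.ofReal_mul (by positivity)]
          simp [ENNReal.ofReal_pow]
  · have := hc J
    have h3 : Continuous fun x : EuclideanSpace ℝ (Fin d) => (1 + ‖x‖ ^ 2) ^ ((p : ℝ) / 2) := by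
      refine Continuous.rpow_const (by fun_prop) fun x => Or.inl (by positivity)
    exact (by fun_prop : Continuous _).measurable.ennreal_ofReal.aemeasurable

lemma choose_params (a b B q : ℝ) (ha : 1 ≤ a) (hb : 1 ≤ b) (hB : 0 < B) (hq : 0 < q) :
    ∃ K : ℝ, 1 ≤ K ∧ ∀ D₂ ε : ℝ, 1 ≤ D₂ → 0 < ε → ε ≤ 1 → ∃ n : ℕ,
      a * b ^ (n + 1) ≤ Real.exp (K * (1 + Real.log (1 / ε) + D₂ ^ ((4 : ℝ) / q))) ∧
      a * (B ^ (n + 1) * D₂ ^ (4 * (n + 1)) *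
        (((n + 1 : ℕ) : ℝ) ^ (-(q * ((n + 1 : ℕ) : ℝ)))) ^ 2) ≤ ε := by
  set c1 : ℝ := (B * Real.exp 1) ^ (1 / (2 * q)) with hc1
  set c2 : ℝ := Real.log a with hc2
  set lb : ℝ := Real.log b with hlb
  have hc1p : 0 < c1 := by positivity
  have hc2p : 0 ≤ c2 := Real.log_nonneg ha
  have hlbp : 0 ≤ lb := Real.log_nonneg hb
  refine ⟨1 + c2 + (3 + c1 + c2) * lb, by nlinarith [mul_nonneg (by positivity : 0 ≤ 3 + c1 + c2) hlbp], ?_⟩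
  intro D₂ ε hD hε0 hε1
  set l : ℝ := Real.log (1 / ε) with hl
  have hlp : 0 ≤ l := Real.log_nonneg (by rw [le_div_iff₀ hε0]; linarith)
  set W : ℝ := D₂ ^ ((4 : ℝ) / q) with hW
  have hW1 : 1 ≤ W := Real.one_le_rpow hD (by positivity)
  set V : ℝ := D₂ ^ ((2 : ℝ) / q) with hV
  have hV0 : 0 < V := by positivity
  have hVW : V ≤ W := Real.rpow_le_rpow_of_exponent_le hD (by gcongr; norm_num)
  set Z : ℝ := c1 * V + l + c2 + 1 with hZ
  have hZ0 : 0 ≤ Z := by positivity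
  set n := ⌊Z⌋₊ with hn
  set m : ℝ := ((n + 1 : ℕ) : ℝ) with hm
  have hm1 : Z ≤ m := by rw [hm]; push_cast; exact (Nat.lt_floor_add_one Z).le
  have hm2 : m ≤ Z + 1 := by
    rw [hm]; push_cast; have := Nat.floor_le hZ0; linarith
  have hm0 : 0 < m := by rw [hm]; positivity
  refine ⟨n, ?_, ?_⟩
  · have e1 : a * b ^ (n + 1) = Real.exp (c2 + m * lb) := by
      rw [Real.exp_add, hc2, Real.exp_log (by linarith), hlb, hm, Real.exp_nat_mul,
        Real.exp_log (by linarith)]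
    rw [e1]
    apply Real.exp_le_exp.mpr
    have h1 : m ≤ (3 + c1 + c2) * (1 + l + W) := by
      have : c1 * V ≤ c1 * W := by gcongr
      nlinarith [mul_nonneg hc2p hlp, mul_nonneg hc1p.le hlp, mul_nonneg hc2p (by linarith : 0 ≤ W)]
    have h2 : m * lb ≤ (3 + c1 + c2) * (1 + l + W) * lb := by gcongr
    nlinarith [mul_nonneg hc2p hlp, mul_nonneg hc2p (by linarith : 0 ≤ W)]
  · have hbase : B * D₂ ^ 4 * Real.exp 1 ≤ m ^ (2 * q) := by
      calc B * D₂ ^ 4 * Real.exp 1 = (c1 * V) ^ (2 * q) := by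
            rw [Real.mul_rpow hc1p.le hV0.le, hc1, hV, ← Real.rpow_mul (by positivity),
              ← Real.rpow_mul (by positivity)]
            have e1 : 1 / (2 * q) * (2 * q) = 1 := by field_simp
            have e2 : 2 / q * (2 * q) = ((4 : ℕ) : ℝ) := by field_simp; norm_num
            rw [e1, e2, Real.rpow_one, Real.rpow_natCast]; ring
        _ ≤ _ := by
            apply Real.rpow_le_rpow (by positivity) _ (by positivity)
            linarith
    have e3 : (m ^ (-(q * m))) ^ 2 = ((m ^ (2 * q))⁻¹) ^ (n + 1) := by
      rw [← Real.rpow_neg hm0.le, ← Real.rpow_natCast (m ^ (-(2 * q))), ← Real.rpow_natCast,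
        ← Real.rpow_mul hm0.le, ← Real.rpow_mul hm0.le, ← hm]
      congr 1; push_cast; ring
    have hmq : 0 < m ^ (2 * q) := by positivity
    have e4 : B ^ (n + 1) * D₂ ^ (4 * (n + 1)) * (m ^ (-(q * m))) ^ 2 =
        (B * D₂ ^ 4 * (m ^ (2 * q))⁻¹) ^ (n + 1) := by
      rw [e3, pow_mul, mul_pow, mul_pow]
    have h5 : B * D₂ ^ 4 * (m ^ (2 * q))⁻¹ ≤ Real.exp (-1) := by
      rw [Real.exp_neg, ← div_eq_mul_inv, div_le_iff₀ hmq, ← div_eq_inv_mul,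
        le_div_iff₀ (Real.exp_pos _)]
      exact hbase
    rw [e4]
    calc a * (B * D₂ ^ 4 * (m ^ (2 * q))⁻¹) ^ (n + 1) ≤ a * (Real.exp (-1)) ^ (n + 1) := by
          gcongr
      _ = Real.exp (c2 - m) := by
          rw [← Real.exp_nat_mul, ← hm, sub_eq_add_neg, Real.exp_add, hc2, Real.exp_log (by linarith)]
          ring_nf
      _ ≤ Real.exp (-l) := by
          apply Real.exp_le_exp.mpr
          have : 0 < c1 * V := by positivity
          linarith
      _ = ε := by rw [hl, one_div, Real.log_inv, neg_neg, Real.exp_log hε0]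

lemma factorial_bound (ν μ δ D : ℝ) (hν : 0 ≤ ν) (hμ0 : 0 ≤ μ) (hD : 1 ≤ D) (n p : ℕ)
    (hpm : p ≤ n + 1) (hp : (p : ℝ) ≤ δ * ((n + 1 : ℕ) : ℝ) + 1) :
    D ^ (p + (n + 1)) * (p.factorial : ℝ) ^ ν * ((n + 1).factorial : ℝ) ^ μ / (n.factorial : ℝ) ≤
      Real.exp ((2 + ν) * ((n + 1 : ℕ) : ℝ)) * D ^ (2 * (n + 1)) *
        ((n + 1 : ℕ) : ℝ) ^ (-((1 - (δ * ν + μ)) * ((n + 1 : ℕ) : ℝ))) := by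
  set m : ℝ := ((n + 1 : ℕ) : ℝ) with hm
  have hm0 : 0 < m := by rw [hm]; positivity
  have hm1 : 1 ≤ m := by rw [hm]; exact_mod_cast Nat.succ_le_succ (Nat.zero_le n)
  have hme : m ≤ Real.exp m := by have := Real.add_one_le_exp m; linarith
  have h1 : (p.factorial : ℝ) ≤ m ^ (δ * m) * Real.exp m := by
    calc (p.factorial : ℝ) ≤ (p : ℝ) ^ p := by exact_mod_cast Nat.factorial_le_pow p
      _ ≤ m ^ p := by gcongr; rw [hm]; exact_mod_cast hpm
      _ = m ^ (p : ℝ) := (Real.rpow_natCast _ _).symm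
      _ ≤ m ^ (δ * m + 1) := Real.rpow_le_rpow_of_exponent_le hm1 hp
      _ = m ^ (δ * m) * m := by rw [Real.rpow_add hm0, Real.rpow_one]
      _ ≤ _ := by gcongr
  have h2 : (p.factorial : ℝ) ^ ν ≤ m ^ (δ * ν * m) * Real.exp (ν * m) := by
    calc _ ≤ (m ^ (δ * m) * Real.exp m) ^ ν := by gcongr
      _ = _ := by
        rw [Real.mul_rpow (by positivity) (by positivity), ← Real.rpow_mul hm0.le, ← Real.exp_mul]
        congr 2 <;> ring
  have h3 : ((n + 1).factorial : ℝ) ^ μ ≤ m ^ (μ * m) := by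
    calc _ ≤ (m ^ (n + 1)) ^ μ := by
          gcongr
          rw [hm]; exact_mod_cast Nat.factorial_le_pow (n + 1)
      _ = _ := by
          rw [← Real.rpow_natCast, ← hm, ← Real.rpow_mul hm0.le, mul_comm]
  have h4 : 1 / (n.factorial : ℝ) ≤ Real.exp (2 * m) * m ^ (-m) := by
    have h5 : m ^ (n + 1) / ((n + 1).factorial : ℝ) ≤ Real.exp m :=
      Real.pow_div_factorial_le_exp m hm0.le (n + 1)
    have h6 : ((n + 1).factorial : ℝ) = m * (n.factorial : ℝ) := by
      rw [Nat.factorial_succ, hm]; push_cast; ring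
    have hn0 : (0 : ℝ) < n.factorial := by positivity
    have h7 : m ^ (n + 1) = m ^ m := by rw [hm, Real.rpow_natCast]
    have hmm : 0 < m ^ m := by positivity
    rw [h6, h7, div_le_iff₀ (by positivity)] at h5
    rw [Real.rpow_neg hm0.le, ← div_eq_mul_inv, div_le_div_iff₀ hn0 hmm, one_mul]
    calc m ^ m ≤ Real.exp m * (m * n.factorial) := h5
      _ ≤ Real.exp m * (Real.exp m * n.factorial) := by gcongr
      _ = _ := by rw [← mul_assoc, ← Real.exp_add]; ring_nf
  calc _ = D ^ (p + (n + 1)) * (p.factorial : ℝ) ^ ν * ((n + 1).factorial : ℝ) ^ μ *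
        (1 / (n.factorial : ℝ)) := by ring
    _ ≤ D ^ (2 * (n + 1)) * (m ^ (δ * ν * m) * Real.exp (ν * m)) * m ^ (μ * m) *
        (Real.exp (2 * m) * m ^ (-m)) := by
        have : D ^ (p + (n + 1)) ≤ D ^ (2 * (n + 1)) := pow_le_pow_right₀ hD (by omega)
        gcongr
    _ = (Real.exp (2 * m) * Real.exp (ν * m)) * D ^ (2 * (n + 1)) *
        (m ^ (δ * ν * m) * m ^ (μ * m) * m ^ (-m)) := by ring
    _ = _ := by
        rw [← Real.exp_add, ← Real.rpow_add hm0, ← Real.rpow_add hm0]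
        congr 2 <;> ring_nf

lemma error_bound (ν μ δ D D₁ Q : ℝ) (d : ℕ) (hν : 0 ≤ ν) (hμ0 : 0 ≤ μ) (hD : 1 ≤ D) (hQ : 0 < Q)
    (n p : ℕ)
    (hpm : p ≤ n + 1) (hp : (p : ℝ) ≤ δ * ((n + 1 : ℕ) : ℝ) + 1) :
    Q ^ (n + 1) / (n.factorial : ℝ) ^ 2 * ((d : ℝ) ^ (n + 1) *
      (D₁ * D ^ (p + (n + 1)) * (p.factorial : ℝ) ^ ν * ((n + 1).factorial : ℝ) ^ μ) ^ 2) ≤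
    ((Q * d * Real.exp (2 * (2 + ν))) ^ (n + 1) * D ^ (4 * (n + 1)) *
      (((n + 1 : ℕ) : ℝ) ^ (-((1 - (δ * ν + μ)) * ((n + 1 : ℕ) : ℝ)))) ^ 2) * D₁ ^ 2 := by
  have h := factorial_bound ν μ δ D hν hμ0 hD n p hpm hp
  have h2 := pow_le_pow_left₀ (by positivity) h 2
  have e : Real.exp ((2 + ν) * ((n + 1 : ℕ) : ℝ)) ^ 2 = Real.exp (2 * (2 + ν)) ^ (n + 1) := by
    rw [← Real.exp_nat_mul, ← Real.exp_nat_mul]; congr 1; push_cast; ring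
  calc _ = (Q * d) ^ (n + 1) * D₁ ^ 2 * (D ^ (p + (n + 1)) * (p.factorial : ℝ) ^ ν *
        ((n + 1).factorial : ℝ) ^ μ / (n.factorial : ℝ)) ^ 2 := by
        rw [div_pow, mul_pow, mul_pow, mul_pow, mul_pow, mul_pow, mul_pow]; ring
    _ ≤ _ := mul_le_mul_of_nonneg_left h2 (by positivity)
    _ = _ := by
        rw [mul_pow _ _ 2, mul_pow (Real.exp _) _ 2, e, ← pow_mul D, mul_pow (Q * d) _ (n + 1)]
        ring_nf

/-- Theorem 1.1 (uncertainty principle with error term for functions with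
Gelfand–Shilov-type bounds). -/
theorem uncertainty_principle
    (d : ℕ) (hd : 1 ≤ d) (ν μ δ R η r₀ γ : ℝ)
    (hν : 0 ≤ ν) (hμ0 : 0 ≤ μ) (hμ1 : μ < 1)
    (hδ0 : 0 ≤ δ) (hδ1 : δ ≤ 1) (hs : δ * ν + μ < 1)
    (hR : 1 ≤ R) (hη0 : 0 < η) (hη1 : η < 1) (hr₀ : 1 ≤ r₀)
    (hγ0 : 0 < γ) (hγ1 : γ < 1) :
    ∃ K : ℝ, 1 ≤ K ∧
      ∀ (f : EuclideanSpace ℝ (Fin d) → ℝ) (D₁ D₂ : ℝ),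
        0 < D₁ → 1 ≤ D₂ → ContDiff ℝ (⊤ : ℕ∞) f →
        (∀ (n : ℕ) (β : Fin d → ℕ),
          eLpNorm (fun x => (1 + ‖x‖ ^ 2) ^ ((n : ℝ) / 2) * mderiv β f x) 2 volume ≤
            ENNReal.ofReal (D₁ * D₂ ^ (n + ∑ i, β i) *
              (n.factorial : ℝ) ^ ν * (((∑ i, β i).factorial : ℝ)) ^ μ)) →
        ∀ ρ : EuclideanSpace ℝ (Fin d) → ℝ, Measurable ρ → (∀ x, 0 < ρ x) →
          (∀ x, ρ x ≤ R * (1 + ‖x‖ ^ 2) ^ (δ / 2)) →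
          (∀ x : EuclideanSpace ℝ (Fin d), r₀ ≤ ‖x‖ → ρ x ≤ η * ‖x‖) →
        ∀ ω : Set (EuclideanSpace ℝ (Fin d)), MeasurableSet ω →
          (∀ x, ENNReal.ofReal γ * volume (Metric.ball x (ρ x)) ≤
            volume (Metric.ball x (ρ x) ∩ ω)) →
        ∀ ε : ℝ, 0 < ε → ε ≤ 1 →
          (eLpNorm f 2 volume) ^ 2 ≤
            ENNReal.ofReal
                (Real.exp (K * (1 + Real.log (1 / ε) + D₂ ^ ((4 : ℝ) / (1 - (δ * ν + μ)))))) *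
              (eLpNorm f 2 (volume.restrict ω)) ^ 2 +
            ENNReal.ofReal (ε * D₁ ^ 2) := by
  obtain ⟨N, hN⟩ := covering_estimate d
  have hd' : (1 : ℝ) ≤ d := by exact_mod_cast hd
  obtain ⟨κ, hκ⟩ : ∃ κ : ℝ, κ = γ ^ 2 / (8 * d) := ⟨_, rfl⟩
  have hκ0 : 0 < κ := by rw [hκ]; positivity
  have hκ1 : κ ≤ 1 := by rw [hκ, div_le_one (by positivity)]; nlinarith
  obtain ⟨C0, hC0⟩ : ∃ C0 : ℝ, C0 = (1 + r₀ ^ 2) / (1 - η) ^ 2 := ⟨_, rfl⟩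
  have hη' : 0 < 1 - η := by linarith
  have hC0p : 0 < C0 := by rw [hC0]; positivity
  obtain ⟨a, ha⟩ : ∃ a : ℝ, a = ((N : ℝ) + 1) * (2 ^ d / κ * 2 * (2 / κ)) := ⟨_, rfl⟩
  obtain ⟨b, hb⟩ : ∃ b : ℝ, b = (12 / κ) ^ 2 := ⟨_, rfl⟩
  have ha1 : 1 ≤ a := by
    have h1 : (1 : ℝ) ≤ 2 ^ d := one_le_pow₀ (by norm_num)
    have h2 : 1 ≤ 2 ^ d / κ := by rw [le_div_iff₀ hκ0]; linarith
    have h3 : 1 ≤ 2 / κ := by rw [le_div_iff₀ hκ0]; linarith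
    have h4 : (1 : ℝ) ≤ (N : ℝ) + 1 := by have := Nat.cast_nonneg (α := ℝ) N; linarith
    rw [ha]
    exact one_le_mul_of_one_le_of_one_le h4
      (one_le_mul_of_one_le_of_one_le (one_le_mul_of_one_le_of_one_le h2 (by norm_num)) h3)
  have hb1 : 1 ≤ b := by
    rw [hb]; exact one_le_pow₀ (by rw [le_div_iff₀ hκ0]; linarith)
  obtain ⟨Q, hQ⟩ : ∃ Q : ℝ, Q = 4 * R ^ 2 * C0 := ⟨_, rfl⟩
  have hQ0 : 0 < Q := by rw [hQ]; positivity
  obtain ⟨K, hK1, hK⟩ := choose_params a b (b * (Q * d * Real.exp (2 * (2 + ν)))) (1 - (δ * ν + μ))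
    ha1 hb1 (by positivity) (by linarith)
  refine ⟨K, hK1, ?_⟩
  intro f D₁ D₂ hD₁ hD₂ hf hder ρ _ hρ0 hρ1 hρ2 ω hω hωγ ε hε0 hε1
  obtain ⟨n, hn1, hn2⟩ := hK D₂ ε hD₂ hε0 hε1
  obtain ⟨p, hp⟩ : ∃ p : ℕ, p = ⌈δ * ((n + 1 : ℕ) : ℝ)⌉₊ := ⟨_, rfl⟩
  have hp1 : δ * ((n + 1 : ℕ) : ℝ) ≤ p := by rw [hp]; exact Nat.le_ceil _
  have hp2 : (p : ℝ) ≤ δ * ((n + 1 : ℕ) : ℝ) + 1 := by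
    rw [hp]; exact (Nat.ceil_lt_add_one (by positivity)).le
  have hp3 : p ≤ n + 1 := by
    rw [hp]; apply Nat.ceil_le.mpr
    exact mul_le_of_le_one_left (by positivity) hδ1
  obtain ⟨A, hA⟩ : ∃ A : ℝ, A = 2 ^ d / κ * (2 * ((12 / κ) ^ (n + 1)) ^ 2) * (2 / κ) := ⟨_, rfl⟩
  have hA0 : 0 < A := by rw [hA]; positivity
  have hAab : ((N : ℝ) + 1) * A = a * b ^ (n + 1) := by
    rw [hA, ha, hb, ← pow_mul, ← pow_mul, mul_comm 2 (n + 1)]; ring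
  have hsq0 : ∀ x, 0 ≤ sqDeriv (n + 1) f x := fun x => Finset.sum_nonneg fun _ _ => sq_nonneg _
  have hcover := hN ρ hρ0 (fun L => ⟨R * (1 + L ^ 2) ^ (δ / 2), fun x hx => (hρ1 x).trans (by
    have := norm_nonneg x
    gcongr)⟩) (fun x => ENNReal.ofReal (f x ^ 2))
    (fun x => ENNReal.ofReal (Q ^ (n + 1) / (n.factorial : ℝ) ^ 2) *
      ENNReal.ofReal ((1 + ‖x‖ ^ 2) ^ p * sqDeriv (n + 1) f x))
    (ENNReal.ofReal A) ω hω (fun x => by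
      have hball := ball_estimate hd γ hγ0 hγ1 κ hκ hf n x (ρ x) (hρ0 x)
        (Metric.ball x (ρ x) ∩ ω) (Metric.isOpen_ball.measurableSet.inter hω)
        Set.inter_subset_left (hωγ x)
      rw [← hA] at hball
      refine hball.trans ?_
      refine mul_le_mul_right (add_le_add le_rfl ?_) _
      rw [← lintegral_const_mul' _ _ ENNReal.ofReal_ne_top]
      refine setLIntegral_mono' Metric.isOpen_ball.measurableSet fun y hy => ?_
      have hρx := hρ0 x
      rw [← ENNReal.ofReal_mul (by positivity), ← ENNReal.ofReal_mul (by positivity)]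
      apply ENNReal.ofReal_le_ofReal
      have hw := weight_compare R δ η r₀ hR hη0 hη1 C0 hC0 ρ hρ0 hρ1 hρ2 (n + 1) p hp1 hp3 x y hy
      rw [← hQ] at hw
      have := hsq0 y
      calc _ ≤ Q ^ (n + 1) * (1 + ‖y‖ ^ 2) ^ p / (n.factorial : ℝ) ^ 2 * sqDeriv (n + 1) f y := by
            gcongr
        _ = _ := by ring)
  rw [lintegral_const_mul' _ _ ENNReal.ofReal_ne_top] at hcover
  have hw := weighted_deriv_bound D₁ D₂ ν μ hD₁ hD₂ hf hder (n + 1) p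
  have herr := error_bound ν μ δ D₂ D₁ Q d hν hμ0 hD₂ hQ0 n p hp3 hp2
  rw [eLpNorm_two_sq, eLpNorm_two_sq]
  set I := ∫⁻ x in ω, ENNReal.ofReal (f x ^ 2) with hI
  set T : ℝ := Q ^ (n + 1) / (n.factorial : ℝ) ^ 2 * ((d : ℝ) ^ (n + 1) *
      (D₁ * D₂ ^ (p + (n + 1)) * (p.factorial : ℝ) ^ ν * ((n + 1).factorial : ℝ) ^ μ) ^ 2) with hT
  have hNN : (N : ENNReal) ≤ ENNReal.ofReal ((N : ℝ) + 1) := by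
    rw [← ENNReal.ofReal_natCast]; exact ENNReal.ofReal_le_ofReal (by linarith)
  calc _ ≤ _ := hcover
    _ ≤ ENNReal.ofReal ((N : ℝ) + 1) * (ENNReal.ofReal A * (I + ENNReal.ofReal T)) := by
        have hTT : ENNReal.ofReal (Q ^ (n + 1) / (n.factorial : ℝ) ^ 2) *
          (∫⁻ x, ENNReal.ofReal ((1 + ‖x‖ ^ 2) ^ p * sqDeriv (n + 1) f x)) ≤ ENNReal.ofReal T := by
          rw [hT, ENNReal.ofReal_mul (by positivity)]
          exact mul_le_mul_right hw _
        exact mul_le_mul' hNN (mul_le_mul_right (add_le_add le_rfl hTT) _)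
    _ = ENNReal.ofReal (a * b ^ (n + 1)) * I + ENNReal.ofReal (a * b ^ (n + 1) * T) := by
        rw [← mul_assoc, ← ENNReal.ofReal_mul (by positivity), hAab, mul_add,
          ENNReal.ofReal_mul (p := a * b ^ (n + 1)) (by positivity)]
    _ ≤ _ := by
        refine add_le_add (mul_le_mul_left (ENNReal.ofReal_le_ofReal hn1) _)
          (ENNReal.ofReal_le_ofReal ?_)
        calc a * b ^ (n + 1) * T ≤ a * b ^ (n + 1) * _ :=
              mul_le_mul_of_nonneg_left herr (by positivity)
          _ = a * ((b * (Q * d * Real.exp (2 * (2 + ν)))) ^ (n + 1) * D₂ ^ (4 * (n + 1)) *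
              (((n + 1 : ℕ) : ℝ) ^ (-((1 - (δ * ν + μ)) * ((n + 1 : ℕ) : ℝ)))) ^ 2) * D₁ ^ 2 := by
              rw [mul_pow b]; ring
          _ ≤ ε * D₁ ^ 2 := mul_le_mul_of_nonneg_right hn2 (by positivity)
end

section
/- Let d ≥ 1, ε ∈ (0,1], κ ≥ 1, D̃₂ ≥ 1, δ ∈ [0,1], 0 ≤ s < 1, set w(x) := (1+|x|²)^{δ/2} and q_m := D̃₂^{2m}(m!)^s for m ∈ ℕ₀. Let f ∈ C^∞(ℝ^d), and let Q ⊂ ℝ^d be an open Euclidean ball of positive radius which is 'good', i.e. for all m ∈ ℕ₀ one has Σ_{|β|=m} (1/β!) ‖w^m ∂^β f‖²_{L²(Q)} ≤ (2κ/ε) · (2^{m+1} d^m q_m² / m!) · ‖f‖²_{L²(Q)}. Then there exists a point x₀ ∈ Q such that for all m ∈ ℕ₀ and all multi-indices β ∈ ℕ₀^d with |β| = m one has |∂^β f(x₀)| ≤ (2κ/ε)^{1/2} · 2^{m+1} d^{m/2} · C(m)^{1/2} · ‖f‖_{L²(Q)}/√|Q|, where C(m) := q_m² · sup_{x ∈ Q}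 w(x)^{−2m}. -/
open MeasureTheory
open scoped ENNReal

theorem contDiff_pderivE_aux {d : ℕ} (i : Fin d) (f : EuclideanSpace ℝ (Fin d) → ℝ)
    (hf : ContDiff ℝ (⊤ : ℕ∞) f) : ContDiff ℝ (⊤ : ℕ∞) (pderivE i f) := by
  unfold pderivE
  have h : ContDiff ℝ (⊤ : ℕ∞) (fderiv ℝ f) := hf.fderiv_right (by simp)
  exact h.clm_apply contDiff_const

theorem contDiff_mderiv_aux {d : ℕ} (β : Fin d → ℕ) (f : EuclideanSpace ℝ (Fin d) → ℝ)
    (hf : ContDiff ℝ (⊤ : ℕ∞) f) : ContDiff ℝ (⊤ : ℕ∞) (mderiv β f) := by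
  unfold mderiv
  induction List.finRange d with
  | nil => simpa using hf
  | cons i l ih =>
    simp only [List.foldr_cons]
    induction β i with
    | zero => simpa using ih
    | succ n ihn =>
      rw [Function.iterate_succ_apply']
      exact contDiff_pderivE_aux i _ ihn

theorem eLpNorm_two_sq_aux {α : Type*} [MeasurableSpace α] (μ : Measure α) (g : α → ℝ) :
    (eLpNorm g 2 μ) ^ 2 = ∫⁻ x, ‖g x‖ₑ ^ 2 ∂μ := by
  have h := eLpNorm_nnreal_pow_eq_lintegral (μ := μ) (f := g) (p := 2) (by norm_num)
  simpa using h

/-- Lemma 2.2 (pointwise estimates for the derivatives of `f` at a suitable point of a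
good ball). -/
theorem pointwise_estimate_on_good_ball
    (d : ℕ) (hd : 1 ≤ d) (ε κ D₂' δ s : ℝ)
    (hε0 : 0 < ε) (hε1 : ε ≤ 1) (hκ : 1 ≤ κ) (hD₂' : 1 ≤ D₂')
    (hδ0 : 0 ≤ δ) (hδ1 : δ ≤ 1) (hs0 : 0 ≤ s) (hs1 : s < 1)
    -- the weight `w` and the sequence `q_m`
    (w : EuclideanSpace ℝ (Fin d) → ℝ) (hw : ∀ x, w x = (1 + ‖x‖ ^ 2) ^ (δ / 2))
    (q : ℕ → ℝ) (hq : ∀ m, q m = D₂' ^ (2 * m) * (m.factorial : ℝ) ^ s)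
    (f : EuclideanSpace ℝ (Fin d) → ℝ) (hf : ContDiff ℝ (⊤ : ℕ∞) f)
    -- the good ball `Q`
    (y : EuclideanSpace ℝ (Fin d)) (r : ℝ) (hr : 0 < r)
    (Q : Set (EuclideanSpace ℝ (Fin d))) (hQ : Q = Metric.ball y r)
    (hGood : ∀ m : ℕ,
      ∑ β ∈ Finset.Nat.antidiagonalTuple d m,
          (((∏ i, (β i).factorial : ℕ) : ℝ≥0∞))⁻¹ *
            (eLpNorm (fun x => w x ^ m * mderiv β f x) 2 (volume.restrict Q)) ^ 2 ≤
        ENNReal.ofReal (2 * κ / ε * (2 ^ (m + 1) * d ^ m * q m ^ 2 / (m.factorial : ℝ))) *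
          (eLpNorm f 2 (volume.restrict Q)) ^ 2) :
    ∃ x₀ ∈ Q, ∀ (m : ℕ) (β : Fin d → ℕ), (∑ i, β i) = m →
      |mderiv β f x₀| ≤
        Real.sqrt (2 * κ / ε) * 2 ^ (m + 1) * (d : ℝ) ^ ((m : ℝ) / 2) *
          Real.sqrt (q m ^ 2 * ⨆ x : Q, (w x ^ (2 * m))⁻¹) *
          ((eLpNorm f 2 (volume.restrict Q)).toReal / Real.sqrt (volume Q).toReal) := by
  subst hQ
  set Q := Metric.ball y r with hQ
  have hw1 : ∀ x, 1 ≤ w x := fun x => by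
    rw [hw]
    exact Real.one_le_rpow (by nlinarith [sq_nonneg ‖x‖]) (by linarith)
  have hwm : ∀ m x, 1 ≤ w x ^ m := fun m x => one_le_pow₀ (hw1 x)
  set S : ℕ → ℝ := fun m => ⨆ x : Q, (w x ^ (2 * m))⁻¹ with hS
  have hyQ : y ∈ Q := Metric.mem_ball_self hr
  have hbdd : ∀ m, BddAbove (Set.range fun x : Q => (w x ^ (2 * m))⁻¹) := fun m =>
    ⟨1, by rintro _ ⟨x, rfl⟩; exact inv_le_one_of_one_le₀ (hwm _ _)⟩
  have hSle : ∀ m, ∀ x ∈ Q, (w x ^ (2 * m))⁻¹ ≤ S m := fun m x hx =>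
    le_ciSup (hbdd m) (⟨x, hx⟩ : Q)
  have hSpos : ∀ m, 0 < S m := fun m =>
    lt_of_lt_of_le (inv_pos.2 (lt_of_lt_of_le one_pos (hwm _ _))) (hSle m y hyQ)
  have hqpos : ∀ m, 0 < q m := fun m => by
    rw [hq]; positivity
  have hd0 : (0 : ℝ) < d := by exact_mod_cast hd
  set K : ℕ → ℝ := fun m => 2 * κ / ε * (2 ^ (m + 1) * d ^ m * q m ^ 2) with hK
  have hKpos : ∀ m, 0 < K m := fun m => by
    have := hqpos m
    simp only [hK]; positivity
  set N := eLpNorm f 2 (volume.restrict Q) with hN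
  have hmeas : ∀ β, Measurable (mderiv β f) := fun β =>
    (contDiff_mderiv_aux β f hf).continuous.measurable
  have hNtop : N ≠ ⊤ := by
    obtain ⟨C, hC⟩ := (isCompact_closedBall y r).exists_bound_of_continuousOn
      hf.continuous.continuousOn
    haveI : IsFiniteMeasure (volume.restrict Q) :=
      isFiniteMeasure_restrict.2 measure_ball_lt_top.ne
    have hb : MemLp f 2 (volume.restrict Q) := by
      refine MemLp.of_bound hf.continuous.aestronglyMeasurable C ?_
      refine (ae_restrict_iff' measurableSet_ball).2 (Filter.Eventually.of_forall fun x hx => ?_)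
      exact hC x (Metric.ball_subset_closedBall hx)
    exact hb.eLpNorm_ne_top
  have hvol0 : volume Q ≠ 0 := (Metric.measure_ball_pos volume y hr).ne'
  have hvolt : volume Q ≠ ⊤ := measure_ball_lt_top.ne
  -- pointwise comparison
  have hpt : ∀ m β, ∀ x ∈ Q, ‖mderiv β f x‖ₑ ^ 2 ≤
      ENNReal.ofReal (S m) * ‖w x ^ m * mderiv β f x‖ₑ ^ 2 := by
    intro m β x hx
    rw [Real.enorm_eq_ofReal_abs, Real.enorm_eq_ofReal_abs, ← ENNReal.ofReal_pow (abs_nonneg _),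
      ← ENNReal.ofReal_pow (abs_nonneg _), ← ENNReal.ofReal_mul (hSpos m).le]
    apply ENNReal.ofReal_le_ofReal
    rw [sq_abs, sq_abs, mul_pow, ← pow_mul, mul_comm m 2, ← mul_assoc]
    apply le_mul_of_one_le_left (sq_nonneg _)
    have h1 := hSle m x hx
    have h2 : 0 < w x ^ (2 * m) := lt_of_lt_of_le one_pos (hwm _ _)
    calc (1 : ℝ) = (w x ^ (2 * m))⁻¹ * w x ^ (2 * m) := (inv_mul_cancel₀ h2.ne').symm
      _ ≤ _ := by gcongr
  have hint : ∀ m, ∑ β ∈ Finset.Nat.antidiagonalTuple d m, ∫⁻ x in Q, ‖mderiv β f x‖ₑ ^ 2 ≤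
      ENNReal.ofReal (K m * S m) * N ^ 2 := by
    intro m
    have hfac : (m.factorial : ℝ≥0∞) ≠ 0 := by exact_mod_cast m.factorial_ne_zero
    have h1 : ∑ β ∈ Finset.Nat.antidiagonalTuple d m,
        (eLpNorm (fun x => w x ^ m * mderiv β f x) 2 (volume.restrict Q)) ^ 2 ≤
        ENNReal.ofReal (K m) * N ^ 2 := by
      calc _ ≤ ∑ β ∈ Finset.Nat.antidiagonalTuple d m, (m.factorial : ℝ≥0∞) *
            ((((∏ i, (β i).factorial : ℕ) : ℝ≥0∞))⁻¹ *
            (eLpNorm (fun x => w x ^ m * mderiv β f x) 2 (volume.restrict Q)) ^ 2) := by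
            apply Finset.sum_le_sum
            intro β hβ
            rw [← mul_assoc]
            apply le_mul_of_one_le_left (zero_le)
            rw [← div_eq_mul_inv]
            rw [ENNReal.le_div_iff_mul_le (Or.inl (by
              exact_mod_cast (Finset.prod_ne_zero_iff.2 fun i _ => (β i).factorial_ne_zero)))
              (Or.inl (ENNReal.natCast_ne_top _)), one_mul]
            rw [Finset.Nat.mem_antidiagonalTuple] at hβ
            have := Nat.prod_factorial_dvd_factorial_sum (Finset.univ) β
            rw [hβ] at this
            exact_mod_cast Nat.le_of_dvd m.factorial_pos this
        _ ≤ (m.factorial : ℝ≥0∞) * (ENNReal.ofReal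
            (2 * κ / ε * (2 ^ (m + 1) * d ^ m * q m ^ 2 / (m.factorial : ℝ))) * N ^ 2) := by
            rw [← Finset.mul_sum]
            gcongr
            exact hGood m
        _ = _ := by
            rw [← mul_assoc, ← ENNReal.ofReal_natCast, ← ENNReal.ofReal_mul (by positivity)]
            congr 2
            simp only [hK]
            have : (m.factorial : ℝ) ≠ 0 := by exact_mod_cast m.factorial_ne_zero
            field_simp
    calc _ ≤ ∑ β ∈ Finset.Nat.antidiagonalTuple d m, ENNReal.ofReal (S m) *
        (eLpNorm (fun x => w x ^ m * mderiv β f x) 2 (volume.restrict Q)) ^ 2 := by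
          apply Finset.sum_le_sum
          intro β _
          rw [eLpNorm_two_sq_aux, ← lintegral_const_mul' _ _ ENNReal.ofReal_ne_top]
          exact setLIntegral_mono' measurableSet_ball (hpt m β)
      _ ≤ ENNReal.ofReal (S m) * (ENNReal.ofReal (K m) * N ^ 2) := by
          rw [← Finset.mul_sum]; gcongr
      _ = _ := by
          rw [← mul_assoc, ← ENNReal.ofReal_mul (hSpos m).le, mul_comm (S m)]
  have hA : ∀ m, 0 < K m * S m := fun m => mul_pos (hKpos m) (hSpos m)
  set c : ℕ → ℝ≥0∞ := fun m => (2⁻¹ : ℝ≥0∞) ^ (m + 1) * (ENNReal.ofReal (K m * S m))⁻¹ with hc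
  set F : EuclideanSpace ℝ (Fin d) → ℝ≥0∞ := fun x =>
    ∑' m, c m * ∑ β ∈ Finset.Nat.antidiagonalTuple d m, ‖mderiv β f x‖ₑ ^ 2 with hF
  have hterm : ∀ m, Measurable fun x =>
      ∑ β ∈ Finset.Nat.antidiagonalTuple d m, ‖mderiv β f x‖ₑ ^ 2 := fun m =>
    Finset.measurable_sum _ fun β _ => ((hmeas β).enorm.pow_const 2)
  have hFm : Measurable F := Measurable.tsum fun m => (hterm m).const_mul _
  have hFint : ∫⁻ x in Q, F x ≤ N ^ 2 := by
    simp only [hF]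
    rw [lintegral_tsum fun m => ((hterm m).const_mul _).aemeasurable]
    calc _ ≤ ∑' m : ℕ, (2⁻¹ : ℝ≥0∞) ^ (m + 1) * N ^ 2 := by
          apply ENNReal.tsum_le_tsum
          intro m
          rw [lintegral_const_mul _ (hterm m),
            lintegral_finsetSum _ fun β _ => ((hmeas β).enorm.pow_const 2)]
          simp only [hc]
          rw [mul_assoc]
          gcongr
          calc _ ≤ (ENNReal.ofReal (K m * S m))⁻¹ * (ENNReal.ofReal (K m * S m) * N ^ 2) := by
                gcongr; exact hint m
            _ = _ := by
                rw [← mul_assoc, ENNReal.inv_mul_cancel (by simpa using hA m)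
                  ENNReal.ofReal_ne_top, one_mul]
      _ = N ^ 2 := by
          rw [ENNReal.tsum_mul_right, ENNReal.tsum_geometric_add_one]
          rw [ENNReal.one_sub_inv_two, inv_inv, ENNReal.inv_mul_cancel (by simp) (by simp), one_mul]
  obtain ⟨x₀, hx₀, hle⟩ := exists_le_setLAverage (μ := volume) (s := Q) (f := F) hvol0 hvolt
    hFm.aemeasurable
  rw [setLAverage_eq] at hle
  refine ⟨x₀, hx₀, ?_⟩
  intro m β hβ
  have h1 : c m * ‖mderiv β f x₀‖ₑ ^ 2 ≤ N ^ 2 / volume Q := by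
    calc _ ≤ c m * ∑ β ∈ Finset.Nat.antidiagonalTuple d m, ‖mderiv β f x₀‖ₑ ^ 2 := by
          gcongr
          exact Finset.single_le_sum (f := fun β => ‖mderiv β f x₀‖ₑ ^ 2)
            (fun _ _ => zero_le) (Finset.Nat.mem_antidiagonalTuple.2 hβ)
      _ ≤ F x₀ := ENNReal.le_tsum m
      _ ≤ _ := hle.trans (by gcongr)
  have h2 : (c m * ‖mderiv β f x₀‖ₑ ^ 2).toReal ≤ (N ^ 2 / volume Q).toReal :=
    ENNReal.toReal_mono (ENNReal.div_ne_top (by finiteness) hvol0) h1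
  simp only [hc, ENNReal.toReal_mul, ENNReal.toReal_pow, ENNReal.toReal_inv, ENNReal.toReal_div,
    toReal_enorm, Real.norm_eq_abs, sq_abs, ENNReal.toReal_ofReal (hA m).le,
    ENNReal.toReal_ofNat] at h2
  set n := N.toReal
  have hn : 0 ≤ n := ENNReal.toReal_nonneg
  set V := (volume Q).toReal
  have hV : 0 < V := ENNReal.toReal_pos hvol0 hvolt
  have h3 : mderiv β f x₀ ^ 2 ≤ 2 ^ (m + 1) * (K m * S m) * (n ^ 2 / V) := by
    have hA' := hA m
    calc mderiv β f x₀ ^ 2 = 2 ^ (m + 1) * (K m * S m) *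
          ((2⁻¹) ^ (m + 1) * (K m * S m)⁻¹ * mderiv β f x₀ ^ 2) := by
          have hA2 := hA'.ne'
          generalize K m * S m = A at hA2 ⊢
          rw [inv_pow]; field_simp
      _ ≤ _ := by gcongr
  have hκε : 0 ≤ 2 * κ / ε := by positivity
  have hqS : 0 ≤ q m ^ 2 * S m := mul_nonneg (sq_nonneg _) (hSpos m).le
  apply abs_le_of_sq_le_sq' _ _ |> abs_le.2
  · refine h3.trans (le_of_eq ?_)
    have hdm : ((d : ℝ) ^ ((m : ℝ) / 2)) ^ 2 = (d : ℝ) ^ m := by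
      rw [← Real.rpow_natCast, ← Real.rpow_mul hd0.le, ← Real.rpow_natCast]
      congr 1
      push_cast
      ring
    rw [mul_pow, mul_pow, mul_pow, mul_pow, div_pow, hdm, Real.sq_sqrt hκε, Real.sq_sqrt hqS,
      Real.sq_sqrt hV.le]
    simp only [hK]
    ring
  · positivity
end
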